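/- There exists a constant C > 0 such that for every real x ≥ 1 and every nonzero ideal K of ℤ[i] with N(K) ≤ x, the ratio (number of pairs (I, J) ∈ P(x) with I ⊔ J = K) / (number of pairs in P(x)) differs from 1/(ζ_{ℚ(i)}(2)·N(K)²) by at most C/(x^(2/3)·N(K)^(4/3)). -/

import Mathlib

open Real

/-- The absolute norm of an ideal of `ℤ[i]`: the cardinality of the quotient ring. -/
noncomputable def normI (I : Ideal GaussianInt) : ℕ := Nat.card (GaussianInt ⧸ I)

/-- `P x` : pairs of nonzero ideals of `ℤ[i]` with both norms at most `x`. -/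
noncomputable def P (x : ℝ) : Set (Ideal GaussianInt × Ideal GaussianInt) :=
  {p | p.1 ≠ ⊥ ∧ p.2 ≠ ⊥ ∧ (normI p.1 : ℝ) ≤ x ∧ (normI p.2 : ℝ) ≤ x}

/-- `ζ_{ℚ(i)}(2)`, the sum of `1/N(I)²` over nonzero ideals of `ℤ[i]`. -/
noncomputable def zetaQi2 : ℝ := ∑' I : {I : Ideal GaussianInt // I ≠ ⊥}, 1 / (normI I.1 : ℝ) ^ 2


noncomputable def eC (t : ℝ) : ℂ := Complex.exp (((2 * π * t : ℝ) : ℂ) * Complex.I)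

lemma eC_norm (t : ℝ) : ‖eC t‖ = 1 := by
  unfold eC; exact Complex.norm_exp_ofReal_mul_I _

lemma eC_add (s t : ℝ) : eC (s + t) = eC s * eC t := by
  unfold eC; rw [← Complex.exp_add]; congr 1; push_cast; ring

lemma eC_int (k : ℤ) : eC k = 1 := by
  unfold eC
  rw [Complex.exp_eq_one_iff]
  exact ⟨k, by push_cast; ring⟩

/-- coefficient -/
noncomputable def cC (t : ℝ) : ℂ := 1 / 2 + ((cos (π * t) / sin (π * t) / 2 : ℝ) : ℂ) * Complex.I

lemma cC_spec (t : ℝ) (h : sin (π * t) ≠ 0) : cC t * (1 - eC t) = 1 := by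
  unfold cC eC
  rw [Complex.exp_mul_I, ← Complex.ofReal_cos, ← Complex.ofReal_sin]
  have h1 : cos (2 * π * t) = 1 - 2 * sin (π * t) ^ 2 := by
    rw [show 2 * π * t = 2 * (π * t) by ring, cos_two_mul]
    nlinarith [sin_sq_add_cos_sq (π * t)]
  have h2 : sin (2 * π * t) = 2 * sin (π * t) * cos (π * t) := by
    rw [show 2 * π * t = 2 * (π * t) by ring, sin_two_mul]
  rw [h1, h2]
  have h3 := sin_sq_add_cos_sq (π * t)
  generalize sin (π * t) = S at *
  generalize cos (π * t) = D at *
  have h' : (S : ℂ) ≠ 0 := by exact_mod_cast h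
  have h3' : (S : ℂ) ^ 2 + (D : ℂ) ^ 2 = 1 := by exact_mod_cast h3
  push_cast
  field_simp
  linear_combination (2 * S : ℂ) * h3' - 2 * S * D ^ 2 * Complex.I_sq

lemma cC_diff (s t : ℝ) : ‖cC s - cC t‖ = |cos (π * s) / sin (π * s) - cos (π * t) / sin (π * t)| / 2 := by
  unfold cC
  rw [show (1 / 2 + ((cos (π * s) / sin (π * s) / 2 : ℝ) : ℂ) * Complex.I) -
    (1 / 2 + ((cos (π * t) / sin (π * t) / 2 : ℝ) : ℂ) * Complex.I) =
    (((cos (π * s) / sin (π * s) - cos (π * t) / sin (π * t)) / 2 : ℝ) : ℂ) * Complex.I by push_cast; ring]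
  rw [norm_mul, Complex.norm_I, mul_one, Complex.norm_real, Real.norm_eq_abs, abs_div]
  norm_num

lemma sin_lower (θ t : ℝ) (h0 : 0 < θ) (h1 : θ ≤ t) (h2 : t ≤ 1 - θ) : 2 * θ ≤ sin (π * t) := by
  have hp := pi_pos
  rcases le_total t (1/2) with h | h
  · have := mul_le_sin (x := π * t) (by nlinarith) (by nlinarith)
    have e : 2 / π * (π * t) = 2 * t := by field_simp
    linarith
  · have := mul_le_sin (x := π * (1 - t)) (by apply mul_nonneg <;> linarith) (by nlinarith)
    have e : 2 / π * (π * (1 - t)) = 2 * (1 - t) := by field_simp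
    have e2 : sin (π * (1 - t)) = sin (π * t) := by rw [show π * (1-t) = π - π * t by ring, sin_pi_sub]
    linarith

lemma cot_anti (s t : ℝ) (h0 : 0 < s) (h1 : s ≤ t) (h2 : t < 1) :
    cos (π * t) / sin (π * t) ≤ cos (π * s) / sin (π * s) := by
  have hp := pi_pos
  have a : 0 < sin (π * s) := sin_pos_of_pos_of_lt_pi (by positivity) (by nlinarith)
  have b : 0 < sin (π * t) := sin_pos_of_pos_of_lt_pi (by nlinarith) (by nlinarith)
  have c : 0 ≤ sin (π * t - π * s) := sin_nonneg_of_nonneg_of_le_pi (by nlinarith) (by nlinarith)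
  rw [sin_sub] at c
  rw [div_le_div_iff₀ b a]; linarith

lemma cot_abs (θ t : ℝ) (h0 : 0 < θ) (h1 : θ ≤ t) (h2 : t ≤ 1 - θ) :
    |cos (π * t) / sin (π * t)| ≤ 1 / (2 * θ) := by
  have := sin_lower θ t h0 h1 h2
  rw [abs_div, abs_of_pos (by linarith : 0 < sin (π * t))]
  exact div_le_div₀ zero_le_one (abs_cos_le_one _) (by positivity) this

lemma cC_norm (θ t : ℝ) (h0 : 0 < θ) (h1 : θ ≤ t) (h2 : t ≤ 1 - θ) : ‖cC t‖ ≤ 1 / θ := by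
  have := cot_abs θ t h0 h1 h2
  unfold cC
  refine (norm_add_le _ _).trans ?_
  rw [norm_mul, Complex.norm_I, mul_one, Complex.norm_real, Real.norm_eq_abs, abs_div]
  have h3 : (1:ℝ) ≤ 1 / (2 * θ) := by rw [le_div_iff₀ (by positivity)]; linarith
  have : 1 / θ = 2 * (1 / (2 * θ)) := by field_simp
  rw [show |(2:ℝ)| = 2 by norm_num]
  rw [show ‖(1/2 : ℂ)‖ = 1/2 by norm_num]
  linarith

/-- Kusmin–Landau with k = 0. -/
lemma KL0 (f : ℕ → ℝ) (a b : ℕ) (θ : ℝ) (h0 : 0 < θ)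
    (hd : ∀ n, a ≤ n → n < b → θ ≤ f (n+1) - f n ∧ f (n+1) - f n ≤ 1 - θ)
    (hm : ∀ n, a ≤ n → n + 1 < b → f (n+1) - f n ≤ f (n+2) - f (n+1)) :
    ‖∑ n ∈ Finset.Ico a b, eC (f n)‖ ≤ 3 / θ := by
  rcases le_or_gt b a with hab | hab
  · rw [Finset.Ico_eq_empty_of_le hab]; simp; positivity
  have key : ∀ m, a + 1 ≤ m → m ≤ b →
      ‖∑ n ∈ Finset.Ico a m, eC (f n) + eC (f m) * cC (f m - f (m-1)) - eC (f a) * cC (f (a+1) - f a)‖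
        ≤ (cos (π * (f (a+1) - f a)) / sin (π * (f (a+1) - f a)) -
            cos (π * (f m - f (m-1))) / sin (π * (f m - f (m-1)))) / 2 := by
    intro m hm1
    induction m, hm1 using Nat.le_induction with
    | base =>
      intro hb
      have := hd a le_rfl hab
      have hs := sin_lower θ _ h0 this.1 this.2
      have := cC_spec (f (a+1) - f a) (by linarith)
      have e1 : eC (f (a+1)) = eC (f a) * eC (f (a+1) - f a) := by rw [← eC_add]; congr 1; ring
      simp only [Nat.Ico_succ_singleton, Finset.sum_singleton, Nat.add_sub_cancel, sub_self, zero_div]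
      rw [e1, show eC (f a) + eC (f a) * eC (f (a+1) - f a) * cC (f (a+1) - f a) - eC (f a) * cC (f (a+1) - f a)
        = eC (f a) * (1 - cC (f (a+1) - f a) * (1 - eC (f (a+1) - f a))) by ring, this]
      simp
    | succ m hm1 ih =>
      intro hb
      have ih := ih (by omega)
      obtain ⟨p, rfl⟩ : ∃ p, m = p + 1 := ⟨m-1, by omega⟩
      simp only [Nat.add_sub_cancel] at ih ⊢
      have d1 := hd p (by omega) (by omega)
      have d2 := hd (p+1) (by omega) (by omega)
      have mm := hm p (by omega) (by omega)
      have hs := sin_lower θ _ h0 d2.1 d2.2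
      have := cC_spec (f (p+1+1) - f (p+1)) (by linarith)
      have e1 : eC (f (p+1+1)) = eC (f (p+1)) * eC (f (p+1+1) - f (p+1)) := by rw [← eC_add]; congr 1; ring
      rw [Finset.sum_Ico_succ_top (by omega)]
      have e2 : ∑ n ∈ Finset.Ico a (p+1), eC (f n) + eC (f (p+1)) + eC (f (p+1+1)) * cC (f (p+1+1) - f (p+1)) - eC (f a) * cC (f (a+1) - f a)
        = (∑ n ∈ Finset.Ico a (p+1), eC (f n) + eC (f (p+1)) * cC (f (p+1) - f p) - eC (f a) * cC (f (a+1) - f a))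
          + eC (f (p+1)) * (cC (f (p+1+1) - f (p+1)) - cC (f (p+1) - f p)) := by
        rw [e1]; linear_combination (-eC (f (p+1))) * this
      rw [e2]
      refine (norm_add_le _ _).trans ?_
      rw [norm_mul, eC_norm, one_mul, cC_diff]
      have := cot_anti (f (p+1) - f p) (f (p+1+1) - f (p+1)) (by linarith) (by simpa using mm) (by linarith)
      rw [abs_of_nonpos (by linarith)]
      linarith
  have k := key b hab le_rfl
  obtain ⟨p, rfl⟩ : ∃ p, b = p + 1 := ⟨b-1, by omega⟩
  simp only [Nat.add_sub_cancel] at k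
  have d1 := hd p (by omega) (by omega)
  have d2 := hd a (by omega) (by omega)
  have n1 := cC_norm θ _ h0 d1.1 d1.2
  have n2 := cC_norm θ _ h0 d2.1 d2.2
  have c1 := (abs_le.1 (cot_abs θ _ h0 d1.1 d1.2)).1
  have c2 := (abs_le.1 (cot_abs θ _ h0 d2.1 d2.2)).2
  have e : ∑ n ∈ Finset.Ico a (p+1), eC (f n) = (∑ n ∈ Finset.Ico a (p+1), eC (f n) + eC (f (p+1)) * cC (f (p+1) - f p) - eC (f a) * cC (f (a+1) - f a)) - eC (f (p+1)) * cC (f (p+1) - f p) + eC (f a) * cC (f (a+1) - f a) := by ring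
  rw [e]
  refine (norm_add_le _ _).trans ?_
  have := norm_sub_le (∑ n ∈ Finset.Ico a (p+1), eC (f n) + eC (f (p+1)) * cC (f (p+1) - f p) - eC (f a) * cC (f (a+1) - f a)) (eC (f (p+1)) * cC (f (p+1) - f p))
  rw [norm_mul, eC_norm, one_mul] at this ⊢
  have e3 : 1 / θ = 2 * (1 / (2 * θ)) := by field_simp
  have e4 : 3 / θ = 3 * (1 / θ) := by ring
  have e5 : 0 < 1 / θ := by positivity
  linarith

lemma KL (f : ℕ → ℝ) (a b : ℕ) (k : ℤ) (θ : ℝ) (h0 : 0 < θ)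
    (hd : ∀ n, a ≤ n → n < b → θ ≤ f (n+1) - f n - k ∧ f (n+1) - f n - k ≤ 1 - θ)
    (hm : ∀ n, a ≤ n → n + 1 < b → f (n+1) - f n ≤ f (n+2) - f (n+1)) :
    ‖∑ n ∈ Finset.Ico a b, eC (f n)‖ ≤ 3 / θ := by
  have := KL0 (fun n => f n + ((-k * n : ℤ) : ℝ)) a b θ h0 (by
      intro n h1 h2; have := hd n h1 h2; push_cast; constructor <;> nlinarith) (by
      intro n h1 h2; have := hm n h1 h2; push_cast; nlinarith)
  simpa only [eC_add, eC_int, mul_one] using this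


lemma ordc_Ico (S : Finset ℕ) (h : ∀ a ∈ S, ∀ b ∈ S, ∀ n, a ≤ n → n ≤ b → n ∈ S) :
    ∃ a b, S = Finset.Ico a b := by
  rcases S.eq_empty_or_nonempty with rfl | hS
  · exact ⟨0, 0, by simp⟩
  · refine ⟨S.min' hS, S.max' hS + 1, ?_⟩
    ext n
    rw [Finset.mem_Ico]
    constructor
    · intro hn; exact ⟨S.min'_le n hn, Nat.lt_succ_of_le (S.le_max' n hn)⟩
    · rintro ⟨h1, h2⟩
      exact h _ (S.min'_mem hS) _ (S.max'_mem hS) n h1 (by omega)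

lemma gap_sum (d : ℕ → ℝ) (N : ℕ) (l : ℝ) (hg : ∀ n, n + 1 < N → l ≤ d (n+1) - d n)
    (a b : ℕ) (hab : a ≤ b) (hb : b < N) : l * (b - a) ≤ d b - d a := by
  induction b, hab using Nat.le_induction with
  | base => simp
  | succ b hab ih =>
    have := ih (by omega)
    have := hg b hb
    push_cast; linarith

lemma gap_card (d : ℕ → ℝ) (N : ℕ) (l : ℝ) (hl : 0 < l) (hg : ∀ n, n + 1 < N → l ≤ d (n+1) - d n)
    (S : Finset ℕ) (hS : S ⊆ Finset.range N) (θ : ℝ) (h0 : 0 ≤ θ)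
    (hw : ∀ a ∈ S, ∀ b ∈ S, d b - d a ≤ θ) : (S.card : ℝ) ≤ θ / l + 1 := by
  rcases S.eq_empty_or_nonempty with rfl | hne
  · simp; positivity
  · have h1 := gap_sum d N l hg (S.min' hne) (S.max' hne) (S.min'_le _ (S.max'_mem hne))
      (Finset.mem_range.1 (hS (S.max'_mem hne)))
    have h2 := hw _ (S.min'_mem hne) _ (S.max'_mem hne)
    have h3 : S ⊆ Finset.Icc (S.min' hne) (S.max' hne) := by
      intro n hn; rw [Finset.mem_Icc]; exact ⟨S.min'_le n hn, S.le_max' n hn⟩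
    have h4 := Finset.card_le_card h3
    rw [Nat.card_Icc] at h4
    have h5 := S.min'_le _ (S.max'_mem hne)
    have h6 : (S.card : ℝ) + S.min' hne ≤ S.max' hne + 1 := by
      have : S.card + S.min' hne ≤ S.max' hne + 1 := by omega
      exact_mod_cast this
    have : ((S.max' hne : ℝ) - S.min' hne) ≤ θ / l := by
      rw [le_div_iff₀ hl]; linarith
    linarith

lemma norm_sum_card (f : ℕ → ℝ) (S : Finset ℕ) : ‖∑ n ∈ S, eC (f n)‖ ≤ S.card := by
  refine (norm_sum_le _ _).trans ?_
  simp [eC_norm]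

lemma VDC (f : ℕ → ℝ) (N H : ℕ) (l : ℝ) (hl : 0 < l)
    (hd : ∀ n, n < N → 0 ≤ f (n+1) - f n ∧ f (n+1) - f n ≤ H)
    (hg : ∀ n, n + 1 < N → l ≤ (f (n+2) - f (n+1)) - (f (n+1) - f n)) :
    ‖∑ n ∈ Finset.range N, eC (f n)‖ ≤ (H + 1) * (5 / √l + 2) := by
  set d : ℕ → ℝ := fun n => f (n+1) - f n with hdd
  have hg' : ∀ n, n + 1 < N → l ≤ d (n+1) - d n := hg
  have mono : ∀ a b, a ≤ b → b < N → d a ≤ d b := by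
    intro a b hab hb
    have := gap_sum d N l hg' a b hab hb
    have h2 : (a:ℝ) ≤ b := by exact_mod_cast hab
    nlinarith
  set θ := √l with hθ
  have hθ0 : 0 < θ := sqrt_pos.2 hl
  have hθl : θ / l = 1 / θ := by
    have : l = θ * θ := (mul_self_sqrt hl.le).symm
    rw [this]; field_simp
  rw [← Finset.sum_fiberwise_of_maps_to (s := Finset.range N) (t := Finset.range (H+1)) (g := fun n => ⌊d n⌋₊)]
  swap
  · intro n hn
    have := hd n (Finset.mem_range.1 hn)
    rw [Finset.mem_range, Nat.lt_succ_iff]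
    exact Nat.floor_le_of_le this.2
  refine (norm_sum_le _ _).trans ?_
  have : ∀ k ∈ Finset.range (H+1), ‖∑ n ∈ Finset.range N with ⌊d n⌋₊ = k, eC (f n)‖ ≤ 5 / θ + 2 := by
    intro k hk
    set F := {n ∈ Finset.range N | ⌊d n⌋₊ = k} with hF
    have memF : ∀ n, n ∈ F ↔ n < N ∧ (k:ℝ) ≤ d n ∧ d n < k + 1 := by
      intro n
      rw [hF, Finset.mem_filter, Finset.mem_range]
      constructor
      · rintro ⟨h1, h2⟩
        have := (Nat.floor_eq_iff (hd n h1).1).1 h2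
        exact ⟨h1, this⟩
      · rintro ⟨h1, h2⟩
        exact ⟨h1, (Nat.floor_eq_iff (hd n h1).1).2 h2⟩
    have FN : F ⊆ Finset.range N := Finset.filter_subset _ _
    rw [← Finset.sum_filter_add_sum_filter_not F (fun n => d n - k < θ)]
    rw [← Finset.sum_filter_add_sum_filter_not (F.filter (fun n => ¬ (d n - k < θ))) (fun n => 1 - θ < d n - k)]
    have b1 : ‖∑ n ∈ F.filter (fun n => d n - k < θ), eC (f n)‖ ≤ 1 / θ + 1 := by
      refine (norm_sum_card _ _).trans ?_
      rw [← hθl]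
      refine gap_card d N l hl hg' _ ((Finset.filter_subset _ _).trans FN) θ hθ0.le ?_
      intro a ha b hb
      rw [Finset.mem_filter, memF] at ha hb
      linarith [ha.1.2.1, hb.2]
    have b2 : ‖∑ n ∈ (F.filter (fun n => ¬ (d n - k < θ))).filter (fun n => 1 - θ < d n - k), eC (f n)‖ ≤ 1 / θ + 1 := by
      refine (norm_sum_card _ _).trans ?_
      rw [← hθl]
      refine gap_card d N l hl hg' _ ((Finset.filter_subset _ _).trans ((Finset.filter_subset _ _).trans FN)) θ hθ0.le ?_
      intro a ha b hb
      rw [Finset.mem_filter, Finset.mem_filter, memF] at ha hb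
      linarith [ha.2, hb.1.1.2.2]
    have b3 : ‖∑ n ∈ (F.filter (fun n => ¬ (d n - k < θ))).filter (fun n => ¬ (1 - θ < d n - k)), eC (f n)‖ ≤ 3 / θ := by
      set G := (F.filter (fun n => ¬ (d n - k < θ))).filter (fun n => ¬ (1 - θ < d n - k)) with hG
      have memG : ∀ n, n ∈ G ↔ (n < N ∧ (k:ℝ) ≤ d n ∧ d n < k + 1) ∧ θ ≤ d n - k ∧ d n - k ≤ 1 - θ := by
        intro n
        rw [hG, Finset.mem_filter, Finset.mem_filter, memF, not_lt, not_lt, and_assoc]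
      obtain ⟨a, b, hab⟩ := ordc_Ico G (by
        intro a ha b hb n h1 h2
        rw [memG] at ha hb ⊢
        have hn : n < N := by omega
        have m1 := mono a n h1 hn
        have m2 := mono n b h2 hb.1.1
        refine ⟨⟨hn, by linarith, by linarith⟩, by linarith, by linarith⟩)
      rw [hab]
      have mem' : ∀ n, a ≤ n → n < b → n ∈ G := by
        intro n h1 h2; rw [hab, Finset.mem_Ico]; exact ⟨h1, h2⟩
      apply KL f a b k θ hθ0
      · intro n h1 h2
        have := (memG n).1 (mem' n h1 h2)
        exact_mod_cast this.2
      · intro n h1 h2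
        have := (memG _).1 (mem' (n+1) (by omega) h2)
        exact mono n (n+1) (by omega) this.1.1
    have := norm_add_le (∑ n ∈ F.filter (fun n => d n - k < θ), eC (f n)) (∑ n ∈ (F.filter (fun n => ¬ (d n - k < θ))).filter (fun n => 1 - θ < d n - k), eC (f n) + ∑ n ∈ (F.filter (fun n => ¬ (d n - k < θ))).filter (fun n => ¬ (1 - θ < d n - k)), eC (f n))
    refine this.trans ?_
    have := norm_add_le (∑ n ∈ (F.filter (fun n => ¬ (d n - k < θ))).filter (fun n => 1 - θ < d n - k), eC (f n)) (∑ n ∈ (F.filter (fun n => ¬ (d n - k < θ))).filter (fun n => ¬ (1 - θ < d n - k)), eC (f n))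
    have e : 5 / θ = 1 / θ + 1 / θ + 3 / θ := by ring
    linarith
  refine (Finset.sum_le_sum this).trans ?_
  simp; linarith


noncomputable def Bf (t : ℝ) : ℝ := Int.fract t ^ 2 - Int.fract t + 1 / 6

lemma Bf_le (v : ℝ) : Bf v ≤ v ^ 2 - v + 1 / 6 := by
  unfold Bf
  have h0 := Int.fract_nonneg v
  have h1 := (Int.fract_lt_one v).le
  have h2 := Int.floor_add_fract v
  generalize Int.fract v = u at *
  generalize ⌊v⌋ = k at *
  rw [← h2]
  rcases le_or_gt 0 k with hk | hk
  · have a : (0:ℝ) ≤ k := by exact_mod_cast hk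
    have b : (0:ℝ) ≤ (k:ℝ) * (k - 1) := by
      rcases hk.eq_or_lt with h | h
      · rw [← h]; simp
      · have : (1:ℝ) ≤ k := by exact_mod_cast h
        nlinarith
    nlinarith [mul_nonneg a h0]
  · have a : (k:ℝ) ≤ -1 := by exact_mod_cast (by omega : k ≤ -1)
    nlinarith [mul_nonneg (by linarith : (0:ℝ) ≤ -k) (by linarith : 0 ≤ 1 - u)]

lemma Bf_int (v : ℝ) (k : ℤ) : Bf (v + k) = Bf v := by unfold Bf; simp

lemma Bf_step (t σ : ℝ) : Bf (t + σ) - Bf t ≤ 2 * σ * (Int.fract t - 1 / 2) + σ ^ 2 := by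
  have h := Bf_le (Int.fract t + σ)
  have e : Bf (Int.fract t + σ) = Bf (t + σ) := by
    rw [← Bf_int _ ⌊t⌋]; congr 1
    have := Int.floor_add_fract t
    linarith
  rw [e] at h
  have : Bf t = Int.fract t ^ 2 - Int.fract t + 1 / 6 := rfl
  nlinarith

lemma eC_re (t : ℝ) : (eC t).re = cos (2 * π * t) := by
  unfold eC; rw [Complex.exp_ofReal_mul_I_re]

lemma Bf_hasSum (t : ℝ) : HasSum (fun n : ℕ => 1 / (n : ℝ) ^ 2 * (eC (n * t)).re) (π ^ 2 * Bf t) := by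
  have h := hasSum_one_div_nat_pow_mul_cos (k := 1) one_ne_zero (x := Int.fract t)
    ⟨Int.fract_nonneg _, (Int.fract_lt_one _).le⟩
  have e : ∀ n : ℕ, eC (n * t) = eC (n * Int.fract t) := by
    intro n
    have : (n:ℝ) * t = n * Int.fract t + ((n * ⌊t⌋ : ℤ) : ℝ) := by
      push_cast
      nth_rewrite 1 [← Int.floor_add_fract t]; ring
    rw [this, eC_add, eC_int, mul_one]
  convert! h using 1
  · ext n
    rw [e, eC_re]; simp only [mul_one]; congr 2; ring
  · simp [Polynomial.bernoulli, Finset.sum_range_succ, Bf]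
    ring

lemma eC_sub_one (s : ℝ) : ‖eC s - 1‖ ≤ 2 * π * |s| := by
  unfold eC
  rw [mul_comm]
  refine (Real.norm_exp_I_mul_ofReal_sub_one_le).trans ?_
  rw [Real.norm_eq_abs, abs_mul, abs_of_pos (by positivity : 0 < 2 * π)]

lemma eC_sub_one' (s : ℝ) : ‖eC s - 1‖ ≤ 2 := by
  refine (norm_sub_le _ _).trans ?_
  rw [eC_norm]; norm_num

lemma sum_S1 (n : ℕ) : ∑ h ∈ Finset.range n, 1 / √((h:ℝ) + 1) ≤ 2 * √n := by
  induction n with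
  | zero => simp
  | succ n ih =>
    rw [Finset.sum_range_succ]; push_cast
    have a := sqrt_nonneg (n:ℝ)
    have b : 0 < √((n:ℝ)+1) := sqrt_pos.2 (by positivity)
    have a2 := sq_sqrt (by positivity : (0:ℝ) ≤ n)
    have b2 := sq_sqrt (by positivity : (0:ℝ) ≤ (n:ℝ)+1)
    have : 1 / √((n:ℝ)+1) ≤ 2 * √((n:ℝ)+1) - 2 * √n := by
      rw [div_le_iff₀ b]; nlinarith [sq_nonneg (√((n:ℝ)+1) - √n)]
    linarith

lemma sum_S2 (H m : ℕ) (hH : 1 ≤ H) (hm : H ≤ m) :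
    ∑ h ∈ Finset.Ico H m, 1 / (((h:ℝ) + 1) * √((h:ℝ) + 1)) ≤ 2 / √H - 2 / √m := by
  induction m, hm using Nat.le_induction with
  | base => simp
  | succ n hn ih =>
    rw [Finset.sum_Ico_succ_top hn]; push_cast
    have hn0 : (0:ℝ) < n := by exact_mod_cast (by omega : 0 < n)
    have a : 0 < √(n:ℝ) := sqrt_pos.2 hn0
    have b : 0 < √((n:ℝ)+1) := sqrt_pos.2 (by positivity)
    have a2 := sq_sqrt (by positivity : (0:ℝ) ≤ n)
    have b2 := sq_sqrt (by positivity : (0:ℝ) ≤ (n:ℝ)+1)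
    have ab : √(n:ℝ) ≤ √((n:ℝ)+1) := sqrt_le_sqrt (by linarith)
    have : 1 / (((n:ℝ)+1) * √((n:ℝ)+1)) ≤ 2 / √n - 2 / √((n:ℝ)+1) := by
      rw [div_sub_div _ _ a.ne' b.ne', div_le_div_iff₀ (by positivity) (by positivity)]
      generalize √(n:ℝ) = p at *
      generalize √((n:ℝ)+1) = q at *
      rw [← b2]
      have h1 : (q - p) * (q + p) = 1 := by nlinarith
      have h2 : 1 ≤ (2 * q - 2 * p) * q := by nlinarith
      have h3 : p * q ≤ q ^ 2 := by nlinarith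
      calc 1 * (p * q) ≤ 1 * q ^ 2 := by linarith
        _ ≤ ((2 * q - 2 * p) * q) * q ^ 2 := mul_le_mul_of_nonneg_right h2 (by positivity)
        _ = _ := by ring
    linarith

lemma D_bound (t : ℕ → ℝ) (N H : ℕ) (T σ : ℝ) (hT : 0 ≤ T) (hH : 1 ≤ H) (hσ : |σ| = 1 / H)
    (hS : ∀ h : ℕ, 1 ≤ h → ‖∑ n ∈ Finset.range N, eC (h * t n)‖ ≤ T * √h) :
    |∑ n ∈ Finset.range N, (Bf (t n + σ) - Bf (t n))| ≤ 2 * T / √H := by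
  have hs : HasSum (fun h : ℕ => ∑ n ∈ Finset.range N,
      (1 / (h : ℝ) ^ 2 * (eC (h * (t n + σ))).re - 1 / (h : ℝ) ^ 2 * (eC (h * (t n))).re))
      (∑ n ∈ Finset.range N, (π ^ 2 * Bf (t n + σ) - π ^ 2 * Bf (t n))) :=
    hasSum_sum (fun n _ => (Bf_hasSum _).sub (Bf_hasSum _))
  have hH0 : (0:ℝ) < H := by exact_mod_cast hH
  have hHs : 0 < √(H:ℝ) := sqrt_pos.2 hH0
  have term : ∀ h : ℕ, |∑ n ∈ Finset.range N,
      (1 / ((h+1 : ℕ) : ℝ) ^ 2 * (eC ((h+1 : ℕ) * (t n + σ))).re - 1 / ((h+1 : ℕ) : ℝ) ^ 2 * (eC ((h+1 : ℕ) * (t n))).re)|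
      ≤ 1 / ((h:ℝ)+1) ^ 2 * (T * √((h:ℝ)+1) * ‖eC (((h:ℝ)+1) * σ) - 1‖) := by
    intro h
    have e : ∑ n ∈ Finset.range N,
      (1 / ((h+1 : ℕ) : ℝ) ^ 2 * (eC ((h+1 : ℕ) * (t n + σ))).re - 1 / ((h+1 : ℕ) : ℝ) ^ 2 * (eC ((h+1 : ℕ) * (t n))).re)
      = 1 / ((h:ℝ)+1) ^ 2 * ((∑ n ∈ Finset.range N, eC ((h+1 : ℕ) * t n)) * (eC (((h:ℝ)+1) * σ) - 1)).re := by
      rw [Finset.sum_mul, Complex.re_sum, Finset.mul_sum]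
      refine Finset.sum_congr rfl fun n _ => ?_
      rw [mul_add, eC_add, mul_sub, Complex.sub_re]
      push_cast; ring_nf
    rw [e, abs_mul, abs_of_pos (by positivity : 0 < 1 / ((h:ℝ)+1)^2)]
    refine mul_le_mul_of_nonneg_left ?_ (by positivity)
    refine (Complex.abs_re_le_norm _).trans ?_
    rw [norm_mul]
    refine mul_le_mul_of_nonneg_right ?_ (norm_nonneg _)
    have := hS (h+1) (by omega)
    simpa using this
  have t1 : ∀ h : ℕ, 1 / ((h:ℝ)+1) ^ 2 * (T * √((h:ℝ)+1) * ‖eC (((h:ℝ)+1) * σ) - 1‖) ≤ 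
      (2 * π * T / H) * (1 / √((h:ℝ)+1)) := by
    intro h
    have := eC_sub_one (((h:ℝ)+1) * σ)
    rw [abs_mul, hσ, abs_of_pos (by positivity)] at this
    have hq : 0 < √((h:ℝ)+1) := sqrt_pos.2 (by positivity)
    have b2 := sq_sqrt (by positivity : (0:ℝ) ≤ (h:ℝ)+1)
    calc _ ≤ 1 / ((h:ℝ)+1) ^ 2 * (T * √((h:ℝ)+1) * (2 * π * (((h:ℝ)+1) * (1 / H)))) := by gcongr
      _ = (2 * π * T / H) * (√((h:ℝ)+1) / ((h:ℝ)+1)) := by field_simp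
      _ = (2 * π * T / H) * (1 / √((h:ℝ)+1)) := by
        congr 1; rw [div_eq_div_iff (by positivity) hq.ne']; nlinarith
  have t2 : ∀ h : ℕ, 1 / ((h:ℝ)+1) ^ 2 * (T * √((h:ℝ)+1) * ‖eC (((h:ℝ)+1) * σ) - 1‖) ≤ 
      (2 * T) * (1 / (((h:ℝ)+1) * √((h:ℝ)+1))) := by
    intro h
    have := eC_sub_one' (((h:ℝ)+1) * σ)
    have hq : 0 < √((h:ℝ)+1) := sqrt_pos.2 (by positivity)
    have b2 := sq_sqrt (by positivity : (0:ℝ) ≤ (h:ℝ)+1)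
    calc _ ≤ 1 / ((h:ℝ)+1) ^ 2 * (T * √((h:ℝ)+1) * 2) := by gcongr
      _ = (2 * T) * (√((h:ℝ)+1) / ((h:ℝ)+1)^2) := by field_simp
      _ = _ := by
        congr 1; rw [div_eq_div_iff (by positivity) (by positivity)]; 
        linear_combination ((h:ℝ)+1) * b2
  have hp3 := pi_gt_three
  have fin : |∑ n ∈ Finset.range N, (π ^ 2 * Bf (t n + σ) - π ^ 2 * Bf (t n))| ≤ π ^ 2 * (2 * T / √H) := by
    refine le_of_tendsto (hs.tendsto_sum_nat.abs) ?_
    filter_upwards [Filter.eventually_ge_atTop (H+1)] with m hm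
    obtain ⟨m, rfl⟩ : ∃ p, m = p + 1 := ⟨m-1, by omega⟩
    rw [Finset.sum_range_succ']
    simp only [Nat.cast_zero, ne_eq, OfNat.ofNat_ne_zero, not_false_eq_true, zero_pow, div_zero, zero_mul, sub_self, Finset.sum_const_zero, add_zero]
    refine (Finset.abs_sum_le_sum_abs _ _).trans ((Finset.sum_le_sum fun h _ => term h).trans ?_)
    rw [← Finset.sum_range_add_sum_Ico _ (by omega : H ≤ m)]
    have A := (Finset.sum_le_sum (s := Finset.range H) fun h _ => t1 h)
    have B := (Finset.sum_le_sum (s := Finset.Ico H m) fun h _ => t2 h)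
    rw [← Finset.mul_sum] at A B
    have A' := mul_le_mul_of_nonneg_left (sum_S1 H) (by positivity : 0 ≤ 2 * π * T / H)
    have B' := mul_le_mul_of_nonneg_left (sum_S2 H m hH (by omega)) (by positivity : 0 ≤ 2 * T)
    have e1 : 2 * π * T / H * (2 * √H) = 4 * π * (T / √H) := by
      have := sq_sqrt hH0.le
      field_simp
      nlinarith
    have e2 : 2 * T * (2 / √H - 2 / √m) ≤ 4 * (T / √H) := by
      have : 0 ≤ 2 * T * (2 / √(m:ℝ)) := by positivity
      have : 2 * T * (2 / √H - 2 / √m) = 4 * (T / √H) - 2 * T * (2 / √(m:ℝ)) := by ring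
      linarith
    have e3 : π ^ 2 * (2 * T / √H) = 2 * π ^ 2 * (T / √H) := by ring
    have e4 : 0 ≤ T / √H := by positivity
    have e5 : (4 * π + 4) * (T / √H) ≤ 2 * π ^ 2 * (T / √H) := mul_le_mul_of_nonneg_right (by nlinarith) e4
    linarith
  have e6 : ∑ n ∈ Finset.range N, (π ^ 2 * Bf (t n + σ) - π ^ 2 * Bf (t n)) = π ^ 2 * ∑ n ∈ Finset.range N, (Bf (t n + σ) - Bf (t n)) := by
    rw [Finset.mul_sum]; exact Finset.sum_congr rfl fun _ _ => by ring
  rw [e6, abs_mul, abs_of_pos (by positivity)] at fin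
  exact le_of_mul_le_mul_left fin (by positivity)

lemma PSI (t : ℕ → ℝ) (N H : ℕ) (T : ℝ) (hT : 0 ≤ T) (hH : 1 ≤ H)
    (hS : ∀ h : ℕ, 1 ≤ h → ‖∑ n ∈ Finset.range N, eC (h * t n)‖ ≤ T * √h) :
    |∑ n ∈ Finset.range N, (Int.fract (t n) - 1 / 2)| ≤ N / H + T * √H := by
  have hH0 : (0:ℝ) < H := by exact_mod_cast hH
  have hHs : 0 < √(H:ℝ) := sqrt_pos.2 hH0
  have d1 := (abs_le.1 (D_bound t N H T (1/H) hT hH (abs_of_pos (by positivity)) hS)).1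
  have d2 := (abs_le.1 (D_bound t N H T (-(1/H)) hT hH (by rw [abs_neg, abs_of_pos (by positivity)]) hS)).1
  have s1 := Finset.sum_le_sum (s := Finset.range N) fun n _ => Bf_step (t n) (1/H)
  have s2 := Finset.sum_le_sum (s := Finset.range N) fun n _ => Bf_step (t n) (-(1/H))
  rw [Finset.sum_add_distrib, ← Finset.mul_sum, Finset.sum_const, Finset.card_range, nsmul_eq_mul] at s1 s2
  set X := ∑ n ∈ Finset.range N, (Int.fract (t n) - 1 / 2)
  have q := sq_sqrt hH0.le
  have e1 : N / H + T * √H = (H / 2) * (2 * T / √H + N * (1/H)^2) + N / (2 * H) := by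
    field_simp
    linear_combination (2 * H * T) * q
  have e2 : (0:ℝ) ≤ N / (2 * H) := by positivity
  have e3 : X = (H/2) * (2 * (1 / H) * X) := by field_simp
  rw [abs_le]
  constructor
  · have : -(2 * T / √H + N * (1/H)^2) ≤ 2 * (1/H) * X := by linarith
    have := mul_le_mul_of_nonneg_left this (by positivity : (0:ℝ) ≤ H/2)
    rw [← e3] at this; linarith
  · have : 2 * (1/H) * X ≤ (2 * T / √H + N * (1/H)^2) := by nlinarith
    have := mul_le_mul_of_nonneg_left this (by positivity : (0:ℝ) ≤ H/2)
    rw [← e3] at this; linarith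


lemma eC_neg_sum (s : ℕ → ℝ) (N : ℕ) : ‖∑ n ∈ Finset.range N, eC (s n)‖ = ‖∑ n ∈ Finset.range N, eC (- s n)‖ := by
  rw [← Complex.norm_conj, map_sum]
  congr 1
  refine Finset.sum_congr rfl fun n _ => ?_
  unfold eC
  rw [← Complex.exp_conj]
  congr 1
  rw [map_mul, Complex.conj_ofReal, Complex.conj_I]
  push_cast; ring

lemma circ_facts (x : ℝ) (hx : 1 ≤ x) (n : ℕ) (hn : (n:ℝ) ≤ √(x/2)) :
    (n:ℝ)^2 ≤ x / 2 ∧ √(x/2) ≤ √(x - n^2) ∧ √(x - n^2)^2 = x - n^2 := by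
  have h : (n:ℝ)^2 ≤ x / 2 := by
    rw [← sq_sqrt (by positivity : (0:ℝ) ≤ x/2)]; gcongr
  exact ⟨h, sqrt_le_sqrt (by linarith), sq_sqrt (by linarith)⟩

lemma circ_diff (x : ℝ) (hx : 1 ≤ x) (n : ℕ) (hn : (n:ℝ) + 1 ≤ √(x/2)) :
    0 ≤ √(x - n^2) - √(x - ((n+1:ℕ):ℝ)^2) ∧ √(x - n^2) - √(x - ((n+1:ℕ):ℝ)^2) ≤ 1 := by
  have hu : 0 < √(x/2) := sqrt_pos.2 (by positivity)
  obtain ⟨a1, a2, a3⟩ := circ_facts x hx n (by linarith)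
  obtain ⟨b1, b2, b3⟩ := circ_facts x hx (n+1) (by push_cast; linarith)
  constructor
  · rw [sub_nonneg]; apply sqrt_le_sqrt; push_cast; nlinarith [(Nat.cast_nonneg n : (0:ℝ) ≤ n)]
  · push_cast at *
    by_contra! hc
    nlinarith

lemma circ_gap (x : ℝ) (hx : 1 ≤ x) (n : ℕ) (hn : (n:ℝ) + 2 ≤ √(x/2)) :
    1 / √x ≤ 2 * √(x - ((n+1:ℕ):ℝ)^2) - √(x - n^2) - √(x - ((n+2:ℕ):ℝ)^2) := by
  have hu : 0 < √(x/2) := sqrt_pos.2 (by positivity)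
  obtain ⟨a1, a2, a3⟩ := circ_facts x hx n (by linarith)
  obtain ⟨b1, b2, b3⟩ := circ_facts x hx (n+1) (by push_cast; linarith)
  obtain ⟨c1, c2, c3⟩ := circ_facts x hx (n+2) (by push_cast; linarith)
  have hR : √(x - ((n+1:ℕ):ℝ)^2) ≤ √x := sqrt_le_sqrt (by nlinarith [sq_nonneg (((n+1:ℕ):ℝ))])
  have hR0 : 0 < √x := sqrt_pos.2 (by linarith)
  push_cast at *
  set p := √(x - (n:ℝ)^2)
  set q := √(x - ((n:ℝ)+1)^2)
  set r := √(x - ((n:ℝ)+2)^2)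
  rw [div_le_iff₀ hR0]
  have h1 : p^2 + r^2 = 2 * q^2 - 2 := by rw [a3, b3, c3]; ring
  -- (p+r)^2 ≤ 2(p^2+r^2) = 4q^2 - 4
  have hp : 0 < p := by linarith
  have hq : 0 < q := by linarith
  have hr : 0 < r := by linarith
  clear a1 a2 a3 b1 b2 b3 c1 c2 c3 hu hn
  clear_value p q r
  have h2 : (p + r)^2 ≤ 4 * q^2 - 4 := by nlinarith [sq_nonneg (p - r)]
  have h3 : 4 ≤ (2 * q - (p + r)) * (2 * q + (p + r)) := by linarith
  have h4 : p + r ≤ 2 * q := by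
    by_contra! hc
    have := mul_pos (sub_pos.2 hc) (by linarith : 0 < 2 * q + (p + r))
    linarith
  have h5 := mul_le_mul_of_nonneg_left (by linarith : 2 * q + (p + r) ≤ 4 * √x) (sub_nonneg.2 h4)
  linarith

lemma circ_S (x : ℝ) (hx : 1 ≤ x) (h : ℕ) (hh : 1 ≤ h) :
    ‖∑ n ∈ Finset.range ⌊√(x/2)⌋₊, eC (h * √(x - n^2))‖ ≤ (14 * √(√x)) * √h := by
  set R := √x with hR
  have hR1 : 1 ≤ R := by rw [hR]; exact one_le_sqrt.2 hx
  have hR0 : 0 < R := by linarith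
  have hh0 : (1:ℝ) ≤ h := by exact_mod_cast hh
  have hu : √(x/2) ≤ R := sqrt_le_sqrt (by linarith)
  have hM : (⌊√(x/2)⌋₊ : ℝ) ≤ √(x/2) := Nat.floor_le (sqrt_nonneg _)
  have hsR := sq_sqrt hR0.le
  have hsh := sq_sqrt (by linarith : (0:ℝ) ≤ h)
  have hsR0 : 0 < √R := sqrt_pos.2 hR0
  have hsh0 : 0 < √(h:ℝ) := sqrt_pos.2 (by linarith)
  rcases le_total (h:ℝ) R with hc | hc
  · rw [eC_neg_sum]
    have := VDC (fun n => -(h * √(x - n^2))) ⌊√(x/2)⌋₊ h (h / R) (by positivity) (by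
        intro n hn
        have : (n:ℝ) + 1 ≤ ⌊√(x/2)⌋₊ := by exact_mod_cast hn
        have := circ_diff x hx n (by linarith)
        constructor <;> nlinarith) (by
        intro n hn
        have : (n:ℝ) + 2 ≤ ⌊√(x/2)⌋₊ := by exact_mod_cast hn
        have := circ_gap x hx n (by linarith)
        have := mul_le_mul_of_nonneg_left this (by positivity : (0:ℝ) ≤ h)
        rw [mul_one_div] at this
        linarith)
    refine this.trans ?_
    rw [sqrt_div (by positivity)]
    have hle : √(h:ℝ) ≤ √R := sqrt_le_sqrt hc
    have e : 5 / (√(h:ℝ) / √R) = 5 * √R / √h := by field_simp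
    rw [e]
    have : 5 * √R / √h + 2 ≤ 7 * √R / √h := by
      rw [div_add' _ _ _ hsh0.ne', div_le_div_iff_of_pos_right hsh0]; linarith
    calc ((h:ℝ)+1) * (5 * √R / √h + 2) ≤ (2 * h) * (7 * √R / √h) := by gcongr; linarith
      _ = 14 * √R * (h / √h) := by ring
      _ = 14 * √R * √h := by rw [div_sqrt]
  · refine (norm_sum_card (fun n => h * √(x - (n:ℝ)^2)) _).trans ?_
    rw [Finset.card_range]
    have hle : √R ≤ √(h:ℝ) := sqrt_le_sqrt hc
    nlinarith

lemma circ_psi (x : ℝ) (hx : 1 ≤ x) :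
    |∑ n ∈ Finset.range ⌊√(x/2)⌋₊, (Int.fract (√(x - (n:ℝ)^2)) - 1 / 2)| ≤ 30 * x ^ ((1:ℝ)/3) := by
  set R := √x with hR
  have hR1 : 1 ≤ R := by rw [hR]; exact one_le_sqrt.2 hx
  have hR0 : 0 < R := by linarith
  set y := x ^ ((1:ℝ)/6) with hy
  have hy1 : 1 ≤ y := one_le_rpow hx (by norm_num)
  have y2 : x ^ ((1:ℝ)/3) = y ^ 2 := by
    rw [hy, ← rpow_natCast, ← rpow_mul (by linarith)]; norm_num
  have y3 : R = y ^ 3 := by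
    rw [hR, sqrt_eq_rpow, hy, ← rpow_natCast, ← rpow_mul (by linarith)]; norm_num
  have hu : √(x/2) ≤ R := sqrt_le_sqrt (by linarith)
  have hM : (⌊√(x/2)⌋₊ : ℝ) ≤ √(x/2) := Nat.floor_le (sqrt_nonneg _)
  have hH : 1 ≤ ⌈y⌉₊ := Nat.one_le_ceil_iff.2 (by linarith)
  have h := PSI (fun n => √(x - (n:ℝ)^2)) ⌊√(x/2)⌋₊ ⌈y⌉₊ (14 * √(√x)) (by positivity) hH
    (fun h hh => circ_S x hx h hh)
  refine h.trans ?_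
  rw [y2]
  have c1 : y ≤ ⌈y⌉₊ := Nat.le_ceil y
  have c2 : (⌈y⌉₊ : ℝ) ≤ 2 * y := by have := Nat.ceil_lt_add_one (by linarith : 0 ≤ y); linarith
  have p1 : (⌊√(x/2)⌋₊ : ℝ) / ⌈y⌉₊ ≤ y ^ 2 := by
    rw [div_le_iff₀ (by linarith)]
    nlinarith [mul_le_mul_of_nonneg_left c1 (sq_nonneg y)]
  have p2 : √(√x) * √(⌈y⌉₊) ≤ 2 * y ^ 2 := by
    rw [← hR, y3, ← sqrt_mul (by positivity)]
    rw [sqrt_le_left (by positivity)]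
    have := mul_le_mul_of_nonneg_left c2 (by positivity : 0 ≤ y ^ 3)
    nlinarith [pow_pos (by linarith : 0 < y) 4]
  nlinarith [sq_nonneg y]


noncomputable def c0 : ℝ := ∫ s in (0:ℝ)..√(1/2), √(1 - s^2)

lemma cont_f (x : ℝ) : Continuous (fun t : ℝ => √(x - t^2)) := by fun_prop

lemma int_scale (x : ℝ) (hx : 1 ≤ x) : ∫ t in (0:ℝ)..√(x/2), √(x - t^2) = c0 * x := by
  have h := intervalIntegral.mul_integral_comp_mul_left (a := 0) (b := √(1/2)) (f := fun t => √(x - t^2)) (√x)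
  have e : √x * √(1/2) = √(x/2) := by rw [← sqrt_mul (by linarith)]; congr 1; ring
  rw [mul_zero, e] at h
  rw [← h]
  have e2 : ∀ s : ℝ, √(x - (√x * s)^2) = √x * √(1 - s^2) := by
    intro s
    rw [← sqrt_mul (by linarith), mul_pow, sq_sqrt (by linarith)]; congr 1; ring
  simp only [e2]
  rw [intervalIntegral.integral_const_mul, ← mul_assoc, mul_self_sqrt (by linarith), c0]
  ring

lemma c0_ge : 1 / 2 ≤ c0 := by
  have hs : 0 ≤ √(1/2:ℝ) := sqrt_nonneg _
  have h : ∫ s in (0:ℝ)..√(1/2), √(1/2:ℝ) ≤ c0 := by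
    apply intervalIntegral.integral_mono_on hs
    · exact intervalIntegrable_const
    · exact (cont_f 1).intervalIntegrable _ _
    · intro t ht
      apply sqrt_le_sqrt
      have : t^2 ≤ √(1/2:ℝ)^2 := by have := ht.1; have := ht.2; gcongr
      rw [sq_sqrt (by norm_num)] at this; linarith
  rw [intervalIntegral.integral_const, sub_zero, smul_eq_mul, mul_self_sqrt (by norm_num)] at h
  exact h

lemma int_lin (n a b : ℝ) : ∫ t in n..(n+1), (a + b * (t - n)) = a + b / 2 := by
  rw [intervalIntegral.integral_add (by simp) (Continuous.intervalIntegrable (by fun_prop) _ _),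
    intervalIntegral.integral_const_mul, intervalIntegral.integral_sub (by simp) (by simp)]
  simp
  ring

lemma trap_alg (u p q s w g : ℝ) (hu : 0 < u) (d1 : 0 ≤ p - q) (d2 : p - q ≤ 1) (s0 : 0 ≤ s) (s1 : s ≤ 1)
    (hw : u ≤ w) (hg : u ≤ g) (id : w^2 - g^2 = s * (1 - s) * (1 + (p - q)^2)) : g ≤ w ∧ w - g ≤ 1 / u := by
  have hs : 0 ≤ s * (1 - s) := mul_nonneg s0 (by linarith)
  have hs1 : s * (1 - s) ≤ 1 := by nlinarith
  have hpq : (p - q)^2 ≤ 1 := pow_le_one₀ d1 d2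
  have hpos : 0 ≤ s * (1 - s) * (1 + (p - q)^2) := mul_nonneg hs (by positivity)
  have hle : s * (1 - s) * (1 + (p - q)^2) ≤ 1 * 2 :=
    mul_le_mul hs1 (by linarith) (by positivity) (by norm_num)
  rw [← id] at hpos hle
  have h1 : g ≤ w := by
    by_contra! hc
    nlinarith
  refine ⟨h1, ?_⟩
  rw [le_div_iff₀ hu]
  have := mul_le_mul_of_nonneg_left (by linarith : 2 * u ≤ w + g) (sub_nonneg.2 h1)
  linarith

lemma trap_one (x : ℝ) (hx : 1 ≤ x) (n : ℕ) (hn : (n:ℝ) + 1 ≤ √(x/2)) :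
    (√(x - n^2) + √(x - ((n+1:ℕ):ℝ)^2)) / 2 ≤ ∫ t in (n:ℝ)..((n+1:ℕ):ℝ), √(x - t^2) ∧
    ∫ t in (n:ℝ)..((n+1:ℕ):ℝ), √(x - t^2) ≤ (√(x - n^2) + √(x - ((n+1:ℕ):ℝ)^2)) / 2 + 1 / √(x/2) := by
  have hu : 0 < √(x/2) := sqrt_pos.2 (by positivity)
  obtain ⟨a1, a2, a3⟩ := circ_facts x hx n (by linarith)
  obtain ⟨b1, b2, b3⟩ := circ_facts x hx (n+1) (by push_cast; linarith)
  obtain ⟨d1, d2⟩ := circ_diff x hx n hn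
  push_cast at *
  set p := √(x - (n:ℝ)^2)
  set q := √(x - ((n:ℝ)+1)^2)
  have key : ∀ t ∈ Set.Icc (n:ℝ) ((n:ℝ)+1), p + (q - p) * (t - n) ≤ √(x - t^2) ∧
      √(x - t^2) ≤ (p + 1 / √(x/2)) + (q - p) * (t - n) := by
    intro t ht
    obtain ⟨s, rfl⟩ : ∃ s, t = n + s := ⟨t - n, by ring⟩
    have s0 : 0 ≤ s := by linarith [ht.1]
    have s1 : s ≤ 1 := by linarith [ht.2]
    have n0 : (0:ℝ) ≤ n := Nat.cast_nonneg n
    rw [add_sub_cancel_left]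
    have hts : ((n:ℝ) + s)^2 ≤ ((n:ℝ)+1)^2 := by gcongr
    have f2 : √(x - ((n:ℝ)+s)^2)^2 = x - ((n:ℝ)+s)^2 := sq_sqrt (by linarith)
    have f0 : √(x/2) ≤ √(x - ((n:ℝ)+s)^2) := sqrt_le_sqrt (by linarith)
    set w := √(x - ((n:ℝ)+s)^2)
    set g := p + (q - p) * s with hg
    have g0 : √(x/2) ≤ g := by rw [hg]; nlinarith [mul_nonneg s0 (sub_nonneg.2 b2), mul_nonneg (sub_nonneg.2 s1) (sub_nonneg.2 a2)]
    have id : w^2 - g^2 = s * (1 - s) * (1 + (p - q)^2) := by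
      rw [f2, hg]
      linear_combination (-(1-s)) * a3 - s * b3
    have := trap_alg _ p q s w g hu d1 d2 s0 s1 f0 g0 id
    exact ⟨this.1, by linarith [this.2]⟩
  constructor
  · have := intervalIntegral.integral_mono_on (μ := MeasureTheory.volume) (a := (n:ℝ)) (b := n+1) (f := fun t => p + (q - p) * (t - n))
      (g := fun t => √(x - t^2)) (by linarith) (Continuous.intervalIntegrable (by fun_prop) _ _) ((cont_f x).intervalIntegrable _ _)
      (fun t ht => (key t ht).1)
    rw [int_lin] at this; linarith
  · have := intervalIntegral.integral_mono_on (μ := MeasureTheory.volume) (a := (n:ℝ)) (b := n+1) (g := fun t => (p + 1 / √(x/2)) + (q - p) * (t - n))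
      (f := fun t => √(x - t^2)) (by linarith) ((cont_f x).intervalIntegrable _ _) (Continuous.intervalIntegrable (by fun_prop) _ _) 
      (fun t ht => (key t ht).2)
    rw [int_lin] at this; linarith

lemma trap_sum (x : ℝ) (hx : 1 ≤ x) (M : ℕ) (hM : (M:ℝ) ≤ √(x/2)) :
    |∑ n ∈ Finset.range M, √(x - (n:ℝ)^2) - √x / 2 + √(x - (M:ℝ)^2) / 2 - ∫ t in (0:ℝ)..(M:ℝ), √(x - t^2)| ≤ M / √(x/2) := by
  induction M with
  | zero => simp
  | succ M ih =>
    have ih := ih (by push_cast at hM; linarith)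
    have h := trap_one x hx M (by push_cast at hM; linarith)
    rw [Finset.sum_range_succ]
    have := intervalIntegral.integral_add_adjacent_intervals ((cont_f x).intervalIntegrable (μ := MeasureTheory.volume) (0:ℝ) M) ((cont_f x).intervalIntegrable (M:ℝ) ((M+1:ℕ):ℝ))
    rw [← this]
    have e : ((M+1:ℕ):ℝ) / √(x/2) = M / √(x/2) + 1 / √(x/2) := by push_cast; ring
    rw [e]
    rw [abs_le] at ih ⊢
    constructor <;> linarith [ih.1, ih.2, h.1, h.2]

lemma fM_bounds (x : ℝ) (hx : 1 ≤ x) :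
    √(x/2) ≤ √(x - (⌊√(x/2)⌋₊:ℝ)^2) ∧ √(x - (⌊√(x/2)⌋₊:ℝ)^2) ≤ √(x/2) + 1 := by
  have hM : (⌊√(x/2)⌋₊ : ℝ) ≤ √(x/2) := Nat.floor_le (sqrt_nonneg _)
  have hM' := Nat.lt_floor_add_one (√(x/2))
  obtain ⟨a1, a2, a3⟩ := circ_facts x hx _ hM
  refine ⟨a2, ?_⟩
  rw [sqrt_le_left (by positivity)]
  have := sq_sqrt (by linarith : 0 ≤ x/2)
  nlinarith [sqrt_nonneg (x/2)]

lemma sum_main (x : ℝ) (hx : 1 ≤ x) :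
    |∑ n ∈ Finset.range ⌊√(x/2)⌋₊, √(x - (n:ℝ)^2) -
      (c0 * x - (√(x/2) - ⌊√(x/2)⌋₊) * √(x/2) + √x / 2 - √(x/2) / 2)| ≤ 3 := by
  have hu : 0 < √(x/2) := sqrt_pos.2 (by positivity)
  have hM : (⌊√(x/2)⌋₊ : ℝ) ≤ √(x/2) := Nat.floor_le (sqrt_nonneg _)
  have hM' := Nat.lt_floor_add_one (√(x/2))
  obtain ⟨b1, b2⟩ := fM_bounds x hx
  have t := trap_sum x hx _ hM
  set M := ⌊√(x/2)⌋₊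
  have t' : (M:ℝ) / √(x/2) ≤ 1 := by rw [div_le_one hu]; exact hM
  have i1 := intervalIntegral.integral_add_adjacent_intervals ((cont_f x).intervalIntegrable (μ := MeasureTheory.volume) (0:ℝ) M) ((cont_f x).intervalIntegrable (M:ℝ) (√(x/2)))
  rw [int_scale x hx] at i1
  have i2 : ∫ t in (M:ℝ)..√(x/2), √(x/2) ≤ ∫ t in (M:ℝ)..√(x/2), √(x - t^2) := by
    apply intervalIntegral.integral_mono_on hM intervalIntegrable_const ((cont_f x).intervalIntegrable _ _)
    intro t ht
    apply sqrt_le_sqrt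
    have : t^2 ≤ √(x/2)^2 := by have := ht.2; have : (0:ℝ) ≤ t := le_trans (Nat.cast_nonneg M) ht.1; gcongr
    rw [sq_sqrt (by linarith)] at this; linarith
  have i3 : ∫ t in (M:ℝ)..√(x/2), √(x - t^2) ≤ ∫ t in (M:ℝ)..√(x/2), √(x - (M:ℝ)^2) := by
    apply intervalIntegral.integral_mono_on hM ((cont_f x).intervalIntegrable _ _) intervalIntegrable_const
    intro t ht
    apply sqrt_le_sqrt
    have : (M:ℝ)^2 ≤ t^2 := by have := ht.1; gcongr
    linarith
  rw [intervalIntegral.integral_const, smul_eq_mul] at i2 i3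
  have i4 : (√(x/2) - M) * √(x - (M:ℝ)^2) ≤ (√(x/2) - M) * √(x/2) + 1 := by nlinarith
  rw [abs_le] at t ⊢
  constructor <;> linarith [t.1, t.2]


/-- count of first-quadrant lattice points -/
noncomputable def QS (x : ℝ) : Finset (ℕ × ℕ) :=
  {p ∈ Finset.range (⌊√x⌋₊ + 1) ×ˢ Finset.range (⌊√x⌋₊ + 1) | (p.1:ℝ)^2 + (p.2:ℝ)^2 ≤ x}

lemma le_fl (x : ℝ) (hx : 0 ≤ x) (a : ℕ) (h : (a:ℝ)^2 ≤ x) : a < ⌊√x⌋₊ + 1 := by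
  rw [Nat.lt_succ_iff]; apply Nat.le_floor; exact le_sqrt_of_sq_le h

lemma mem_QS (x : ℝ) (hx : 0 ≤ x) (p : ℕ × ℕ) : p ∈ QS x ↔ (p.1:ℝ)^2 + (p.2:ℝ)^2 ≤ x := by
  unfold QS
  rw [Finset.mem_filter, Finset.mem_product, Finset.mem_range, Finset.mem_range]
  constructor
  · exact fun h => h.2
  · intro h
    exact ⟨⟨le_fl x hx _ (by nlinarith), le_fl x hx _ (by nlinarith)⟩, h⟩

lemma col_card (x : ℝ) (hx : 0 ≤ x) (a : ℕ) (ha : (a:ℝ)^2 ≤ x) (p : ℕ × ℕ → Prop) [DecidablePred p]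
    (hp : ∀ q ∈ QS x, p q ↔ q.1 = a) :
    ((QS x).filter p).card = ⌊√(x - (a:ℝ)^2)⌋₊ + 1 := by
  rw [← Finset.card_range (⌊√(x - (a:ℝ)^2)⌋₊ + 1)]
  symm
  apply Finset.card_bij (fun b _ => (a, b))
  · intro b hb
    rw [Finset.mem_range, Nat.lt_succ_iff] at hb
    have h1 : (b:ℝ) ≤ √(x - (a:ℝ)^2) := le_trans (by exact_mod_cast hb) (Nat.floor_le (sqrt_nonneg _))
    have h2 : (b:ℝ)^2 ≤ √(x - (a:ℝ)^2)^2 := by gcongr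
    rw [sq_sqrt (by linarith)] at h2
    have : (a,b) ∈ QS x := by rw [mem_QS x hx]; simp only; linarith
    rw [Finset.mem_filter]
    exact ⟨this, (hp _ this).2 rfl⟩
  · intro b _ c _ h; exact (Prod.mk.inj h).2
  · intro q hq
    rw [Finset.mem_filter] at hq
    have h1 := (hp q hq.1).1 hq.2
    have h2 := (mem_QS x hx q).1 hq.1
    refine ⟨q.2, ?_, ?_⟩
    · rw [Finset.mem_range, Nat.lt_succ_iff]
      apply Nat.le_floor; apply le_sqrt_of_sq_le; rw [← h1]; linarith
    · ext <;> simp [h1]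

lemma strip_card (x : ℝ) (hx : 1 ≤ x) :
    ((QS x).filter (fun p => p.1 ≤ ⌊√(x/2)⌋₊)).card =
      ∑ a ∈ Finset.range (⌊√(x/2)⌋₊ + 1), (⌊√(x - (a:ℝ)^2)⌋₊ + 1) := by
  rw [Finset.card_eq_sum_card_fiberwise (f := Prod.fst) (t := Finset.range (⌊√(x/2)⌋₊ + 1))]
  · refine Finset.sum_congr rfl fun a ha => ?_
    rw [Finset.mem_range, Nat.lt_succ_iff] at ha
    rw [Finset.filter_filter]
    apply col_card x (by linarith)
    · have hM : (⌊√(x/2)⌋₊ : ℝ) ≤ √(x/2) := Nat.floor_le (sqrt_nonneg _)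
      have := (circ_facts x hx a (le_trans (by exact_mod_cast ha) hM)).1
      linarith
    · intro q _
      constructor
      · exact fun h => h.2
      · intro h; exact ⟨by omega, h⟩
  · intro p hp
    simp only [Finset.coe_filter, Set.mem_setOf_eq] at hp
    simp only [Finset.coe_range, Set.mem_Iio]; omega

lemma QS_card (x : ℝ) (hx : 1 ≤ x) :
    (QS x).card + (⌊√(x/2)⌋₊ + 1)^2 = 2 * ∑ a ∈ Finset.range (⌊√(x/2)⌋₊ + 1), (⌊√(x - (a:ℝ)^2)⌋₊ + 1) := by
  have hx0 : 0 ≤ x := by linarith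
  have hM : (⌊√(x/2)⌋₊ : ℝ) ≤ √(x/2) := Nat.floor_le (sqrt_nonneg _)
  have hM' := Nat.lt_floor_add_one (√(x/2))
  have hsq := sq_sqrt (by linarith : 0 ≤ x/2)
  rw [← strip_card x hx]
  set M := ⌊√(x/2)⌋₊
  set S1 := (QS x).filter (fun p => p.1 ≤ M)
  set S2 := (QS x).filter (fun p => p.2 ≤ M)
  have e1 : S2.card = S1.card := by
    apply Finset.card_bij (fun p _ => p.swap)
    · intro p hp
      simp only [S1, S2, Finset.mem_filter, mem_QS x hx0] at hp ⊢
      exact ⟨by simp only [Prod.fst_swap, Prod.snd_swap]; linarith [hp.1], hp.2⟩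
    · intro p _ q _ h; exact Prod.swap_injective h
    · intro p hp
      refine ⟨p.swap, ?_, by simp⟩
      simp only [S1, S2, Finset.mem_filter, mem_QS x hx0] at hp ⊢
      exact ⟨by simp only [Prod.fst_swap, Prod.snd_swap]; linarith [hp.1], hp.2⟩
  have e2 : S1 ∪ S2 = QS x := by
    rw [← Finset.filter_or]
    apply Finset.filter_true_of_mem
    intro p hp
    rw [mem_QS x hx0] at hp
    by_contra! hc
    have h1 : (M:ℝ) + 1 ≤ p.1 := by exact_mod_cast hc.1
    have h2 : (M:ℝ) + 1 ≤ p.2 := by exact_mod_cast hc.2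
    have h3 : √(x/2)^2 < (p.1:ℝ)^2 := by gcongr; linarith
    have h4 : √(x/2)^2 < (p.2:ℝ)^2 := by gcongr; linarith
    linarith
  have e3 : S1 ∩ S2 = Finset.range (M+1) ×ˢ Finset.range (M+1) := by
    rw [← Finset.filter_and]
    ext p
    rw [Finset.mem_filter, mem_QS x hx0, Finset.mem_product, Finset.mem_range, Finset.mem_range, Nat.lt_succ_iff, Nat.lt_succ_iff]
    constructor
    · exact fun h => h.2
    · intro h
      have h1 : (p.1:ℝ) ≤ M := by exact_mod_cast h.1
      have h2 : (p.2:ℝ) ≤ M := by exact_mod_cast h.2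
      have h3 := (circ_facts x hx p.1 (by linarith)).1
      have h4 := (circ_facts x hx p.2 (by linarith)).1
      exact ⟨by linarith, h⟩
  have e4 := Finset.card_union_add_card_inter S1 S2
  rw [e2, e3, Finset.card_product, Finset.card_range] at e4
  nlinarith

/-- representatives -/
noncomputable def QA (x : ℝ) : Finset (ℕ × ℕ) := (QS x).filter (fun p => 1 ≤ p.1)

lemma QA_card (x : ℝ) (hx : 1 ≤ x) : (QA x).card + (⌊√x⌋₊ + 1) = (QS x).card := by
  have h := Finset.card_filter_add_card_filter_not (s := QS x) (fun p => 1 ≤ p.1)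
  rw [← h]
  unfold QA
  congr 1
  rw [col_card x (by linarith) 0 (by simp; linarith) (fun p => ¬ (1 ≤ p.1)) (by intro q _; omega)]
  simp

lemma QA_asymp (x : ℝ) (hx : 1 ≤ x) : |((QA x).card : ℝ) - (2 * c0 - 1/2) * x| ≤ 100 * x ^ ((1:ℝ)/3) := by
  have h1 := QA_card x hx
  have h2 := QS_card x hx
  have h3 := circ_psi x hx
  have h4 := sum_main x hx
  obtain ⟨b1, b2⟩ := fM_bounds x hx
  have hM : (⌊√(x/2)⌋₊ : ℝ) ≤ √(x/2) := Nat.floor_le (sqrt_nonneg _)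
  have hM' := Nat.lt_floor_add_one (√(x/2))
  have hsq := sq_sqrt (by linarith : 0 ≤ x/2)
  have hx3 : 1 ≤ x ^ ((1:ℝ)/3) := one_le_rpow hx (by norm_num)
  rw [Finset.sum_range_succ] at h2
  have f1 : (⌊√x⌋₊:ℝ) ≤ √x := Nat.floor_le (sqrt_nonneg _)
  have f1' := Nat.lt_floor_add_one (√x)
  have f2 : (⌊√(x - (⌊√(x/2)⌋₊:ℝ)^2)⌋₊:ℝ) ≤ √(x - (⌊√(x/2)⌋₊:ℝ)^2) := Nat.floor_le (sqrt_nonneg _)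
  have f2' := Nat.lt_floor_add_one (√(x - (⌊√(x/2)⌋₊:ℝ)^2))
  have e : ((∑ a ∈ Finset.range ⌊√(x/2)⌋₊, (⌊√(x - (a:ℝ)^2)⌋₊ + 1) : ℕ) : ℝ) =
      ∑ a ∈ Finset.range ⌊√(x/2)⌋₊, √(x - (a:ℝ)^2) - ∑ n ∈ Finset.range ⌊√(x/2)⌋₊, (Int.fract (√(x - (n:ℝ)^2)) - 1 / 2) + ⌊√(x/2)⌋₊ / 2 := by
    push_cast
    rw [← Finset.sum_sub_distrib]
    have : (⌊√(x/2)⌋₊:ℝ) / 2 = ∑ n ∈ Finset.range ⌊√(x/2)⌋₊, (1/2:ℝ) := by simp; ring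
    rw [this, ← Finset.sum_add_distrib]
    refine Finset.sum_congr rfl fun n _ => ?_
    have : (⌊√(x - (n:ℝ)^2)⌋₊ : ℝ) = √(x - (n:ℝ)^2) - Int.fract √(x - (n:ℝ)^2) := by
      rw [natCast_floor_eq_intCast_floor (sqrt_nonneg _)]; exact (Int.self_sub_fract _).symm
    rw [this]; ring
  generalize ⌊√(x - (⌊√(x/2)⌋₊:ℝ)^2)⌋₊ = F at *
  generalize √(x - (⌊√(x/2)⌋₊:ℝ)^2) = fM at *
  generalize (∑ a ∈ Finset.range ⌊√(x/2)⌋₊, (⌊√(x - (a:ℝ)^2)⌋₊ + 1)) = SS at *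
  generalize ∑ n ∈ Finset.range ⌊√(x/2)⌋₊, √(x - (n:ℝ)^2) = SF at *
  generalize ∑ n ∈ Finset.range ⌊√(x/2)⌋₊, (Int.fract (√(x - (n:ℝ)^2)) - 1 / 2) = PS at *
  generalize ⌊√(x/2)⌋₊ = M at *
  generalize √(x/2) = u at *
  generalize ⌊√x⌋₊ = G at *
  generalize x ^ ((1:ℝ)/3) = z at *
  have h1r : ((QA x).card:ℝ) + (G + 1) = (QS x).card := by exact_mod_cast h1
  have h2r : ((QS x).card:ℝ) + (M+1)^2 = 2 * (SS + (F+1)) := by exact_mod_cast h2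
  have hv : (u - M)^2 ≤ 1 := pow_le_one₀ (by linarith) (by linarith)
  have hv0 := sq_nonneg (u - (M:ℝ))
  have hid : (u - M) * u = u^2 / 2 + (u-M)^2/2 - M^2/2 := by ring
  rw [abs_le] at *
  constructor <;> nlinarith [h3.1, h3.2, h4.1, h4.2]


noncomputable def gB : Module.Basis (Fin 2) ℤ GaussianInt :=
  Module.Basis.ofEquivFun
    { toFun := fun z => ![z.re, z.im]
      invFun := fun v => ⟨v 0, v 1⟩
      left_inv := fun z => by simp
      right_inv := fun v => by ext i; fin_cases i <;> simp
      map_add' := fun a b => by ext i; fin_cases i <;> simp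
      map_smul' := fun a b => by ext i; fin_cases i <;> simp }

instance gFree : Module.Free ℤ GaussianInt := Module.Free.of_basis gB
instance gFin : Module.Finite ℤ GaussianInt := Module.Finite.of_basis gB

lemma g_norm (z : GaussianInt) : Algebra.norm ℤ z = z.norm := by
  rw [Algebra.norm_eq_matrix_det gB, Matrix.det_fin_two]
  simp [Algebra.leftMulMatrix_eq_repr_mul, gB, Zsqrtd.norm_def]

lemma normI_eq (I : Ideal GaussianInt) : normI I = Ideal.absNorm I := by
  unfold normI; rfl

lemma normI_span (z : GaussianInt) : normI (Ideal.span {z}) = z.norm.natAbs := by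
  rw [normI_eq, Ideal.absNorm_span_singleton, g_norm]

lemma normI_mul (I J : Ideal GaussianInt) : normI (I * J) = normI I * normI J := by
  simp only [normI_eq, map_mul]

lemma normI_pos (I : Ideal GaussianInt) (h : I ≠ ⊥) : 1 ≤ normI I := by
  rw [normI_eq, Nat.one_le_iff_ne_zero, Ne, Ideal.absNorm_eq_zero_iff]; exact h

noncomputable def phiI (p : ℕ × ℕ) : Ideal GaussianInt := Ideal.span {(⟨p.1, p.2⟩ : GaussianInt)}

lemma normI_phi (p : ℕ × ℕ) : normI (phiI p) = p.1^2 + p.2^2 := by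
  unfold phiI
  rw [normI_span, Zsqrtd.norm_def]
  zify
  rw [abs_of_nonneg (by nlinarith [sq_nonneg (p.1:ℤ), sq_nonneg (p.2:ℤ)])]
  ring

lemma phi_surj (I : Ideal GaussianInt) (hI : I ≠ ⊥) : ∃ p : ℕ × ℕ, 1 ≤ p.1 ∧ phiI p = I := by
  obtain ⟨g, rfl⟩ := (IsPrincipalIdealRing.principal I).principal
  have hg : g ≠ 0 := by rintro rfl; simp at hI
  have key : ∃ u : GaussianInt, IsUnit u ∧ 1 ≤ (g * u).re ∧ 0 ≤ (g * u).im := by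
    have hne : ¬ (g.re = 0 ∧ g.im = 0) := fun h => hg (by ext <;> simp [h.1, h.2])
    have hu1 : IsUnit (⟨0, 1⟩ : GaussianInt) := IsUnit.of_mul_eq_one ⟨0, -1⟩ (by ext <;> simp)
    have hu2 : IsUnit (⟨0, -1⟩ : GaussianInt) := IsUnit.of_mul_eq_one ⟨0, 1⟩ (by ext <;> simp)
    have hu3 : IsUnit (⟨-1, 0⟩ : GaussianInt) := IsUnit.of_mul_eq_one ⟨-1, 0⟩ (by ext <;> simp)
    by_cases h1 : 1 ≤ g.re ∧ 0 ≤ g.im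
    · exact ⟨1, isUnit_one, by simpa using h1⟩
    by_cases h2 : g.re ≤ 0 ∧ 1 ≤ g.im
    · exact ⟨⟨0, -1⟩, hu2, by simp; omega⟩
    by_cases h3 : g.re ≤ -1 ∧ g.im ≤ 0
    · exact ⟨⟨-1, 0⟩, hu3, by simp; omega⟩
    · exact ⟨⟨0, 1⟩, hu1, by simp; omega⟩
  obtain ⟨u, hu, h1, h2⟩ := key
  refine ⟨((g * u).re.toNat, (g * u).im.toNat), by simp only; omega, ?_⟩
  unfold phiI
  have e : (⟨((g * u).re.toNat : ℤ), ((g * u).im.toNat : ℤ)⟩ : GaussianInt) = g * u := by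
    ext
    · simp only; omega
    · simp only; omega
  rw [e]
  exact Ideal.span_singleton_mul_right_unit hu g

lemma phi_inj (p q : ℕ × ℕ) (hp : 1 ≤ p.1) (hq : 1 ≤ q.1) (h : phiI p = phiI q) : p = q := by
  unfold phiI at h
  rw [Ideal.span_singleton_eq_span_singleton] at h
  obtain ⟨u, hu⟩ := h
  obtain ⟨⟨a, b⟩, hab⟩ : ∃ z : GaussianInt, (u : GaussianInt) = z := ⟨_, rfl⟩
  have hn : a * a + b * b = 1 := by
    have h1 : IsUnit (u : GaussianInt) := u.isUnit
    rw [hab, ← Zsqrtd.norm_eq_one_iff, Zsqrtd.norm_def] at h1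
    simp only at h1
    have : 0 ≤ a * a - -1 * b * b := by nlinarith [mul_self_nonneg a, mul_self_nonneg b]
    zify at h1
    rw [abs_of_nonneg this] at h1
    linarith
  rw [hab] at hu
  have hre := congrArg Zsqrtd.re hu
  have him := congrArg Zsqrtd.im hu
  simp at hre him
  have ha : a ≤ 1 := by nlinarith
  have ha' : -1 ≤ a := by nlinarith
  have hb : b ≤ 1 := by nlinarith
  have hb' : -1 ≤ b := by nlinarith
  have : (q.1:ℤ) = p.1 ∧ (q.2:ℤ) = p.2 := by
    interval_cases a <;> interval_cases b <;> simp at hn <;> omega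
  ext <;> omega

noncomputable def IA (x : ℝ) : Finset (Ideal GaussianInt) :=
  open scoped Classical in (QA x).image phiI

lemma mem_IA (x : ℝ) (hx : 0 ≤ x) (I : Ideal GaussianInt) : I ∈ IA x ↔ I ≠ ⊥ ∧ (normI I : ℝ) ≤ x := by
  unfold IA QA
  rw [Finset.mem_image]
  constructor
  · rintro ⟨p, hp, rfl⟩
    rw [Finset.mem_filter, mem_QS x hx] at hp
    refine ⟨?_, ?_⟩
    · unfold phiI
      rw [Ne, Ideal.span_singleton_eq_bot]
      intro h
      have := congrArg Zsqrtd.re h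
      simp at this; omega
    · rw [normI_phi]; exact_mod_cast hp.1
  · rintro ⟨h1, h2⟩
    obtain ⟨p, hp, rfl⟩ := phi_surj I h1
    rw [normI_phi] at h2
    refine ⟨p, ?_, rfl⟩
    rw [Finset.mem_filter, mem_QS x hx]
    exact ⟨by exact_mod_cast h2, hp⟩

lemma card_IA (x : ℝ) : (IA x).card = (QA x).card := by
  unfold IA
  apply Finset.card_image_of_injOn
  intro p hp q hq h
  unfold QA at hp hq
  simp only [Finset.coe_filter, Set.mem_ofPred_eq] at hp hq
  exact phi_inj p q hp.2 hq.2 h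

lemma IA_empty (x : ℝ) (hx : 0 ≤ x) (h : x < 1) : IA x = ∅ := by
  rw [Finset.eq_empty_iff_forall_notMem]
  intro I hI
  rw [mem_IA x hx] at hI
  have : (1:ℝ) ≤ normI I := by exact_mod_cast normI_pos I hI.1
  linarith [hI.2]

abbrev NI := {I : Ideal GaussianInt // I ≠ ⊥}

lemma summable_43 : Summable (fun I : NI => 1 / (normI I.1 : ℝ) ^ ((4:ℝ)/3)) := by
  -- reindex by ℕ × ℕ
  have h1 : Summable (fun a : ℕ => 1 / ((a:ℝ)+1) ^ ((4:ℝ)/3)) := by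
    have := (summable_nat_add_iff 1).2 (Real.summable_one_div_nat_rpow.2 (by norm_num : (1:ℝ) < 4/3))
    simpa using this
  have h2 : Summable (fun p : ℕ × ℕ => (1 / ((p.1:ℝ)+1) ^ ((4:ℝ)/3)) * (1 / ((p.2:ℝ)+1) ^ ((4:ℝ)/3))) :=
    h1.mul_of_nonneg h1 (fun _ => by positivity) (fun _ => by positivity)
  have hc : ∀ I : NI, ∃ p : ℕ × ℕ, phiI (p.1 + 1, p.2) = I.1 := by
    intro I
    obtain ⟨p, hp, h⟩ := phi_surj I.1 I.2
    exact ⟨(p.1 - 1, p.2), by rw [← h]; congr 1; ext <;> simp; omega⟩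
  choose g hg using hc
  have gi : Function.Injective g := by
    intro I J h
    apply Subtype.ext
    rw [← hg I, ← hg J, h]
  have h3 := (h2.comp_injective gi).mul_left ((2:ℝ) ^ ((4:ℝ)/3))
  refine Summable.of_nonneg_of_le (fun _ => by positivity) ?_ h3
  intro I
  simp only [Function.comp]
  rw [← hg I, normI_phi]
  push_cast
  have ha : (0:ℝ) ≤ (g I).1 := Nat.cast_nonneg _
  have hb : (0:ℝ) ≤ (g I).2 := Nat.cast_nonneg _
  generalize ((g I).1 : ℝ) = a at *
  generalize ((g I).2 : ℝ) = b at *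
  have h4 : (a+1) * (b+1) ≤ 2 * ((a+1)^2 + b^2) := by
    nlinarith [sq_nonneg (a + 1 - (b+1)), sq_nonneg (b-1)]
  have h5 := rpow_le_rpow (by positivity) h4 (by norm_num : (0:ℝ) ≤ 4/3)
  rw [mul_rpow (by positivity) (by positivity), mul_rpow (by positivity) (by positivity)] at h5
  rw [div_mul_div_comm, one_mul, mul_one_div, div_le_div_iff₀ (by positivity) (by positivity)]
  linarith

lemma summable_2 : Summable (fun I : NI => 1 / (normI I.1 : ℝ) ^ 2) := by
  refine Summable.of_nonneg_of_le (fun _ => by positivity) ?_ summable_43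
  intro I
  have : (1:ℝ) ≤ normI I.1 := by exact_mod_cast normI_pos I.1 I.2
  apply one_div_le_one_div_of_le (by positivity)
  rw [← rpow_natCast]
  exact rpow_le_rpow_of_exponent_le this (by norm_num)


noncomputable abbrev muI (I : Ideal GaussianInt) : ℤ := UniqueFactorizationMonoid.moebius I

lemma muI_abs (I : Ideal GaussianInt) : |(muI I : ℝ)| ≤ 1 := by
  by_cases h : Squarefree I
  · unfold muI; rw [h.moebius_eq]; push_cast; rw [abs_pow]; simp
  · unfold muI; rw [UniqueFactorizationMonoid.moebius_of_not_squarefree h]; simp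

lemma dvd_norm_le {D I : Ideal GaussianInt} (hI : I ≠ ⊥) (h : D ∣ I) :
    D ≠ ⊥ ∧ normI D ≤ normI I := by
  obtain ⟨J, rfl⟩ := h
  have h1 : D ≠ ⊥ := by rintro rfl; simp at hI
  have h2 : J ≠ ⊥ := by rintro rfl; simp at hI
  refine ⟨h1, ?_⟩
  rw [normI_mul]
  exact Nat.le_mul_of_pos_right _ (normI_pos J h2)

noncomputable def divI (I : Ideal GaussianInt) : Finset (Ideal GaussianInt) :=
  open scoped Classical in (IA (normI I)).filter (· ∣ I)

lemma mem_divI {I : Ideal GaussianInt} (hI : I ≠ ⊥) (D : Ideal GaussianInt) : D ∈ divI I ↔ D ∣ I := by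
  unfold divI
  classical
  rw [Finset.mem_filter, mem_IA _ (by positivity)]
  constructor
  · exact fun h => h.2
  · intro h
    have := dvd_norm_le hI h
    exact ⟨⟨this.1, by exact_mod_cast this.2⟩, h⟩

open scoped Classical in
lemma mu_sum {I : Ideal GaussianInt} (hI : I ≠ ⊥) :
    ∑ D ∈ divI I, muI D = if I = 1 then 1 else 0 := by
  split_ifs with h
  · have : divI I = {1} := by
      ext D
      rw [mem_divI hI, h, Finset.mem_singleton, ← isUnit_iff_dvd_one, Ideal.isUnit_iff, Ideal.one_eq_top]
    rw [this, Finset.sum_singleton]; exact UniqueFactorizationMonoid.moebius_one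
  · obtain ⟨p, hp, hpI⟩ := WfDvdMonoid.exists_irreducible_factor
      (a := I) (by rwa [Ideal.isUnit_iff, ← Ideal.one_eq_top]) hI
    obtain ⟨q, hq⟩ := hpI
    have rel : ∀ D : Ideal GaussianInt, ¬ p ∣ D → IsRelPrime p D := fun D hD =>
      (hp.isRelPrime_iff_not_dvd).2 hD
    have e1 : ∑ D ∈ divI I, muI D = ∑ D ∈ (divI I).filter Squarefree, muI D := by
      rw [Finset.sum_filter]
      apply Finset.sum_congr rfl
      intro D _
      split_ifs with hs
      · rfl
      · exact UniqueFactorizationMonoid.moebius_of_not_squarefree hs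
    rw [e1, ← Finset.sum_filter_add_sum_filter_not _ (fun D => p ∣ D)]
    have e2 : ∑ D ∈ ((divI I).filter Squarefree).filter (fun D => ¬ p ∣ D), (- muI D)
        = ∑ D ∈ ((divI I).filter Squarefree).filter (fun D => p ∣ D), muI D := by
      apply Finset.sum_nbij (fun D => p * D)
      · intro D hD
        simp only [Finset.mem_filter, mem_divI hI] at hD ⊢
        refine ⟨⟨?_, ?_⟩, dvd_mul_right _ _⟩
        · rw [hq]
          apply mul_dvd_mul_left
          have := hD.1.1
          rw [hq] at this
          exact (rel D hD.2).symm.dvd_of_dvd_mul_left this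
        · exact squarefree_mul_iff.2 ⟨rel D hD.2, hp.squarefree, hD.1.2⟩
      · intro D _ E _ h
        exact mul_left_cancel₀ hp.ne_zero h
      · intro D hD
        simp only [Finset.coe_filter, Finset.mem_filter, mem_divI hI, Set.mem_ofPred_eq] at hD
        obtain ⟨⟨h1, h2⟩, E, rfl⟩ := hD
        have h3 := squarefree_mul_iff.1 h2
        refine ⟨E, ?_, rfl⟩
        simp only [Finset.coe_filter, Finset.mem_filter, mem_divI hI, Set.mem_ofPred_eq]
        exact ⟨⟨(dvd_mul_left _ _).trans h1, h3.2.2⟩, (hp.isRelPrime_iff_not_dvd).1 h3.1⟩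
      · intro D hD
        simp only [Finset.mem_filter, mem_divI hI] at hD
        unfold muI
        rw [(rel D hD.2).moebius_mul, hp.moebius_eq]; ring
    rw [← e2, Finset.sum_neg_distrib]; ring

noncomputable def MI : ℝ := ∑' D : NI, (muI D.1 : ℝ) / (normI D.1 : ℝ)^2

lemma summable_M : Summable (fun D : NI => (muI D.1 : ℝ) / (normI D.1 : ℝ)^2) := by
  refine Summable.of_norm_bounded summable_2 ?_
  intro D
  rw [norm_div, Real.norm_eq_abs, Real.norm_eq_abs, abs_of_nonneg (by positivity : (0:ℝ) ≤ (normI D.1 : ℝ)^2)]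
  exact div_le_div_of_nonneg_right (muI_abs _) (by positivity)

def mulNI (D I : NI) : NI := ⟨D.1 * I.1, mul_ne_zero D.2 I.2⟩

lemma mulNI_inj (D : NI) : Function.Injective (mulNI D) := by
  intro I J h
  apply Subtype.ext
  exact mul_left_cancel₀ D.2 (congrArg Subtype.val h)

lemma summable_MZ : Summable (fun p : NI × NI => (muI p.1.1 : ℝ) / (normI p.1.1 : ℝ)^2 * (1 / (normI p.2.1 : ℝ)^2)) := by
  have := summable_mul_of_summable_norm (R := ℝ) summable_M.norm summable_2.norm
  exact this

set_option maxHeartbeats 1000000 in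
open scoped Classical in
lemma M_zeta : MI * zetaQi2 = 1 := by
  let F : NI → NI → ℝ := fun D J => if D.1 ∣ J.1 then (muI D.1 : ℝ) / (normI J.1 : ℝ)^2 else 0
  have hF : ∀ D I, F D (mulNI D I) = (muI D.1 : ℝ) / (normI D.1 : ℝ)^2 * (1 / (normI I.1 : ℝ)^2) := by
    intro D I
    simp only [F, mulNI]
    rw [if_pos (dvd_mul_right _ _), normI_mul]
    push_cast
    rw [mul_pow, div_mul_div_comm, mul_one]
  have hsupp : ∀ D J, F D J ≠ 0 → ∃ I, mulNI D I = J := by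
    intro D J h
    simp only [F] at h
    have h' : D.1 ∣ J.1 := by by_contra hh; simp [hh] at h
    obtain ⟨I, hI⟩ := h'
    have : I ≠ ⊥ := by rintro rfl; exact J.2 (by rw [hI]; simp)
    exact ⟨⟨I, this⟩, Subtype.ext hI.symm⟩
  have s1 : ∀ D, ∑' J, F D J = (muI D.1 : ℝ) / (normI D.1 : ℝ)^2 * zetaQi2 := by
    intro D
    rw [← (mulNI_inj D).tsum_eq (f := F D)]
    · simp_rw [hF]; rw [tsum_mul_left]; rfl
    · intro J hJ
      exact hsupp D J hJ
  have s2 : ∀ J, ∑' D, F D J = if J.1 = 1 then 1 else 0 := by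
    intro J
    have : ∑' D : NI, F D J = ∑ D ∈ (divI J.1).subtype (fun I => I ≠ ⊥), F D J := by
      apply tsum_eq_sum
      intro D hD
      rw [Finset.mem_subtype, mem_divI J.2] at hD
      simp [F, hD]
    rw [this]
    have h2 : ∑ D ∈ (divI J.1).subtype (fun I => I ≠ ⊥), F D J
        = ∑ D ∈ (divI J.1), (muI D : ℝ) / (normI J.1 : ℝ)^2 := by
      rw [← Finset.sum_subtype_of_mem (p := fun I => I ≠ ⊥) (fun D => (muI D : ℝ) / (normI J.1 : ℝ)^2)]
      · apply Finset.sum_congr rfl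
        intro D hD
        rw [Finset.mem_subtype, mem_divI J.2] at hD
        simp [F, hD]
      · intro D hD
        rw [mem_divI J.2] at hD
        exact (dvd_norm_le J.2 hD).1
    rw [h2, ← Finset.sum_div, ← Int.cast_sum, mu_sum J.2]
    split_ifs with h
    · rw [h]; simp [normI_eq]
    · simp
  have hs : Summable (fun p : NI × NI => F p.1 p.2) := by
    let G : NI × NI → NI × NI := fun p => (p.1, mulNI p.1 p.2)
    have Gi : Function.Injective G := by
      rintro ⟨a, b⟩ ⟨c, d⟩ h
      simp only [G, Prod.mk.injEq] at h
      obtain ⟨rfl, h⟩ := h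
      rw [mulNI_inj _ h]
    rw [← Gi.summable_iff]
    · simp only [Function.comp_def, G, hF]
      exact summable_MZ
    · rintro ⟨D, J⟩ h
      by_contra hne
      obtain ⟨I, hI⟩ := hsupp D J hne
      exact h ⟨(D, I), by simp [G, hI]⟩
  have key := Summable.tsum_comm (f := F) hs
  simp_rw [s1, s2] at key
  rw [tsum_mul_right] at key
  rw [tsum_eq_single (⟨1, one_ne_zero⟩ : NI)] at key
  · simp only [if_true] at key; exact key.symm
  · intro b hb
    rw [if_neg]
    intro h
    exact hb (Subtype.ext h)

lemma zeta_ge : 1 ≤ zetaQi2 := by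
  have := summable_2.le_tsum (⟨1, one_ne_zero⟩ : NI) (fun _ _ => by positivity)
  simpa [normI_eq, zetaQi2] using this


open scoped Classical in
noncomputable def BI (y : ℝ) : ℕ := ((IA y ×ˢ IA y).filter (fun p => p.1 ⊔ p.2 = 1)).card

open scoped Classical in
lemma IA_image (y : ℝ) (hy : 0 ≤ y) (D : Ideal GaussianInt) (hD : D ≠ ⊥) :
    (IA y).filter (fun I => D ∣ I) = (IA (y / normI D)).image (fun I => D * I) := by
  have hn : (1:ℝ) ≤ normI D := by exact_mod_cast normI_pos D hD
  ext I
  rw [Finset.mem_filter, mem_IA y hy, Finset.mem_image]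
  constructor
  · rintro ⟨⟨h1, h2⟩, J, rfl⟩
    refine ⟨J, ?_, rfl⟩
    rw [mem_IA _ (by positivity)]
    refine ⟨by rintro rfl; simp at h1, ?_⟩
    rw [normI_mul] at h2
    rw [le_div_iff₀ (by positivity)]
    push_cast at h2; linarith
  · rintro ⟨J, hJ, rfl⟩
    rw [mem_IA _ (by positivity), le_div_iff₀ (by positivity)] at hJ
    refine ⟨⟨mul_ne_zero hD hJ.1, ?_⟩, dvd_mul_right _ _⟩
    rw [normI_mul]; push_cast; linarith [hJ.2]

open scoped Classical in
lemma IA_dvd_card (y : ℝ) (hy : 0 ≤ y) (D : Ideal GaussianInt) (hD : D ≠ ⊥) :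
    ((IA y).filter (fun I => D ∣ I)).card = (IA (y / normI D)).card := by
  rw [IA_image y hy D hD]
  apply Finset.card_image_of_injective
  intro I J h
  exact mul_left_cancel₀ hD h

open scoped Classical in
lemma BI_eq (y : ℝ) (hy : 0 ≤ y) :
    (BI y : ℤ) = ∑ D ∈ IA y, muI D * ((IA (y / normI D)).card : ℤ)^2 := by
  unfold BI
  rw [Finset.card_filter]
  push_cast
  have h1 : ∀ p ∈ IA y ×ˢ IA y, (if p.1 ⊔ p.2 = 1 then (1:ℤ) else 0)
      = ∑ D ∈ IA y, if D ∣ p.1 ∧ D ∣ p.2 then muI D else 0 := by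
    intro p hp
    rw [Finset.mem_product, mem_IA y hy, mem_IA y hy] at hp
    have hne : p.1 ⊔ p.2 ≠ ⊥ := by
      intro h
      exact hp.1.1 (sup_eq_bot_iff.1 h).1
    rw [← mu_sum hne, ← Finset.sum_filter]
    apply Finset.sum_congr _ (fun _ _ => rfl)
    ext D
    rw [mem_divI hne, Finset.mem_filter, mem_IA y hy, Ideal.dvd_iff_le, Ideal.dvd_iff_le,
      Ideal.dvd_iff_le, sup_le_iff]
    constructor
    · intro h
      have := dvd_norm_le hp.1.1 (Ideal.dvd_iff_le.2 h.1)
      exact ⟨⟨this.1, (by exact_mod_cast this.2 : (normI D : ℝ) ≤ normI p.1).trans hp.1.2⟩, h⟩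
    · exact fun h => h.2
  rw [Finset.sum_congr rfl h1, Finset.sum_comm]
  apply Finset.sum_congr rfl
  intro D hD
  rw [mem_IA y hy] at hD
  rw [← IA_dvd_card y hy D hD.1, ← Finset.sum_filter, Finset.sum_const, Finset.filter_product,
    Finset.card_product, nsmul_eq_mul]
  push_cast; ring

lemma BI_tsum (y : ℝ) (hy : 0 ≤ y) :
    (BI y : ℝ) = ∑' D : NI, (muI D.1 : ℝ) * ((IA (y / normI D.1)).card : ℝ)^2 := by
  classical
  have h := congrArg (Int.cast : ℤ → ℝ) (BI_eq y hy)
  push_cast at h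
  rw [h, tsum_eq_sum (s := (IA y).subtype (fun I => I ≠ ⊥))]
  · rw [← Finset.sum_subtype_of_mem (p := fun I => I ≠ ⊥) (fun D => (muI D : ℝ) * ((IA (y / normI D)).card : ℝ)^2)]
    intro D hD
    exact ((mem_IA y hy D).1 hD).1
  · intro D hD
    rw [Finset.mem_subtype, mem_IA y hy] at hD
    have hlt : y < normI D.1 := by
      by_contra hh
      exact hD ⟨D.2, not_lt.1 hh⟩
    have hp : (0:ℝ) < normI D.1 := lt_of_le_of_lt hy hlt
    rw [IA_empty _ (by positivity) (by rw [div_lt_one hp]; exact hlt)]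
    simp

noncomputable def cc : ℝ := 2 * c0 - 1/2

lemma cc_pos : 1/2 ≤ cc := by unfold cc; linarith [c0_ge]

lemma A_asymp (t : ℝ) (ht : 0 < t) : |((IA t).card : ℝ) - cc * t| ≤ (100 + cc) * t ^ ((1:ℝ)/3) := by
  have hc := cc_pos
  rcases le_or_gt 1 t with h | h
  · have := QA_asymp t h
    rw [card_IA]
    refine this.trans ?_
    have : 0 ≤ t ^ ((1:ℝ)/3) := by positivity
    nlinarith
  · rw [IA_empty t ht.le h]
    have h1 : t ≤ t ^ ((1:ℝ)/3) := by
      have := rpow_le_rpow_of_exponent_ge ht h.le (by norm_num : (1:ℝ)/3 ≤ 1)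
      rwa [rpow_one] at this
    have : 0 ≤ t ^ ((1:ℝ)/3) := by positivity
    simp only [Finset.card_empty, Nat.cast_zero, zero_sub, abs_neg]
    rw [abs_of_nonneg (by positivity)]
    nlinarith

lemma A_le (t : ℝ) (ht : 0 < t) : ((IA t).card : ℝ) ≤ (100 + 2 * cc) * t := by
  have hc := cc_pos
  rcases le_or_gt 1 t with h | h
  · have h0 := (abs_le.1 (A_asymp t ht)).2
    have h1 : t ^ ((1:ℝ)/3) ≤ t := by
      have := rpow_le_rpow_of_exponent_le h (by norm_num : (1:ℝ)/3 ≤ 1)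
      rwa [rpow_one] at this
    nlinarith
  · rw [IA_empty t ht.le h]
    simp only [Finset.card_empty, Nat.cast_zero]
    positivity

lemma A_sq (t : ℝ) (ht : 0 < t) :
    |((IA t).card : ℝ)^2 - cc^2 * t^2| ≤ ((100 + cc) * (100 + 3 * cc)) * t ^ ((4:ℝ)/3) := by
  have hc := cc_pos
  have h1 := A_asymp t ht
  have h2 := A_le t ht
  have e : t ^ ((4:ℝ)/3) = t ^ ((1:ℝ)/3) * t := by
    rw [← rpow_add_one ht.ne']; norm_num
  have f : ((IA t).card : ℝ)^2 - cc^2 * t^2 = ((IA t).card - cc * t) * ((IA t).card + cc * t) := by ring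
  rw [f, abs_mul, e]
  have h3 : |((IA t).card : ℝ) + cc * t| ≤ (100 + 3 * cc) * t := by
    rw [abs_of_nonneg (by positivity)]; linarith
  calc _ ≤ ((100 + cc) * t ^ ((1:ℝ)/3)) * ((100 + 3 * cc) * t) :=
        mul_le_mul h1 h3 (abs_nonneg _) (by positivity)
    _ = _ := by ring

noncomputable def S43 : ℝ := ∑' I : NI, 1 / (normI I.1 : ℝ) ^ ((4:ℝ)/3)

noncomputable def CB : ℝ := ((100 + cc) * (100 + 3 * cc)) * S43

lemma B_asymp (y : ℝ) (hy : 0 < y) : |(BI y : ℝ) - cc^2 * y^2 * MI| ≤ CB * y ^ ((4:ℝ)/3) := by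
  have hc := cc_pos
  have hg : Summable (fun D : NI => (((100 + cc) * (100 + 3 * cc)) * y ^ ((4:ℝ)/3)) * (1 / (normI D.1 : ℝ) ^ ((4:ℝ)/3))) :=
    summable_43.mul_left _
  have hM : Summable (fun D : NI => cc^2 * y^2 * ((muI D.1 : ℝ) / (normI D.1 : ℝ)^2)) :=
    summable_M.mul_left _
  have hb : ∀ D : NI, ‖(muI D.1 : ℝ) * ((IA (y / normI D.1)).card : ℝ)^2
      - cc^2 * y^2 * ((muI D.1 : ℝ) / (normI D.1 : ℝ)^2)‖
      ≤ (((100 + cc) * (100 + 3 * cc)) * y ^ ((4:ℝ)/3)) * (1 / (normI D.1 : ℝ) ^ ((4:ℝ)/3)) := by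
    intro D
    have hn : (1:ℝ) ≤ normI D.1 := by exact_mod_cast normI_pos D.1 D.2
    have h1 := A_sq (y / normI D.1) (by positivity)
    rw [div_rpow hy.le (by positivity)] at h1
    have e : (muI D.1 : ℝ) * ((IA (y / normI D.1)).card : ℝ)^2
      - cc^2 * y^2 * ((muI D.1 : ℝ) / (normI D.1 : ℝ)^2)
      = (muI D.1 : ℝ) * (((IA (y / normI D.1)).card : ℝ)^2 - cc^2 * (y / normI D.1)^2) := by
      rw [div_pow]; ring
    rw [e, Real.norm_eq_abs, abs_mul]
    calc _ ≤ 1 * _ := mul_le_mul (muI_abs _) h1 (abs_nonneg _) (by norm_num)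
      _ = _ := by ring
  have hd := Summable.of_norm_bounded hg hb
  have hB : Summable (fun D : NI => (muI D.1 : ℝ) * ((IA (y / normI D.1)).card : ℝ)^2) := by
    have := hd.add hM
    simpa using this
  have e : (BI y : ℝ) - cc^2 * y^2 * MI = ∑' D : NI, ((muI D.1 : ℝ) * ((IA (y / normI D.1)).card : ℝ)^2
      - cc^2 * y^2 * ((muI D.1 : ℝ) / (normI D.1 : ℝ)^2)) := by
    rw [hB.tsum_sub hM, BI_tsum y hy.le, tsum_mul_left]; rfl
  rw [e, ← Real.norm_eq_abs]
  refine (tsum_of_norm_bounded hg.hasSum hb).trans (le_of_eq ?_)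
  rw [tsum_mul_left]
  unfold CB S43
  ring

lemma S43_nonneg : 0 ≤ S43 := tsum_nonneg (fun _ => by positivity)

lemma A_lower : ∃ d : ℝ, 0 < d ∧ ∀ x : ℝ, 1 ≤ x → d * x ≤ ((IA x).card : ℝ) := by
  have hc := cc_pos
  set R : ℝ := (2 * (100 + cc) / cc) with hR
  have hR0 : 0 < R := by positivity
  have hR1 : 1 ≤ R := by rw [hR, le_div_iff₀ (by positivity)]; linarith
  refine ⟨min (cc / 2) (1 / R^2), by positivity, ?_⟩
  intro x hx
  rcases le_or_gt x (R^2) with h | h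
  · have h1 : (1:ℝ) ≤ (IA x).card := by
      have : (IA x).Nonempty := ⟨1, (mem_IA x (by linarith) 1).2 ⟨one_ne_zero, by simpa [normI_eq] using hx⟩⟩
      exact_mod_cast this.card_pos
    have h2 : min (cc / 2) (1 / R^2) * x ≤ 1 / R^2 * R^2 :=
      mul_le_mul (min_le_right _ _) h (by linarith) (by positivity)
    rw [one_div_mul_cancel (by positivity)] at h2
    linarith
  · have h0 := (abs_le.1 (A_asymp x (by linarith))).1
    have h1 : x ^ ((1:ℝ)/3) ≤ x ^ ((1:ℝ)/2) := rpow_le_rpow_of_exponent_le hx (by norm_num)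
    rw [← Real.sqrt_eq_rpow] at h1
    have hs : R ≤ √x := Real.le_sqrt_of_sq_le h.le
    have hsq : √x * √x = x := Real.mul_self_sqrt (by linarith)
    have h3 : R * √x ≤ x := by
      have := mul_le_mul_of_nonneg_right hs (Real.sqrt_nonneg x)
      linarith
    have h4 : (100 + cc) = cc / 2 * R := by rw [hR]; field_simp
    have h5 : (100 + cc) * x ^ ((1:ℝ)/3) ≤ cc / 2 * x := by
      calc _ ≤ (100 + cc) * √x := by gcongr
        _ = cc / 2 * (R * √x) := by rw [h4]; ring
        _ ≤ _ := by gcongr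
    have h6 : min (cc / 2) (1 / R^2) * x ≤ cc / 2 * x := by
      gcongr; exact min_le_left _ _
    linarith

lemma P_card (x : ℝ) (hx : 0 ≤ x) : (P x).ncard = (IA x).card ^ 2 := by
  have : P x = ((IA x ×ˢ IA x : Finset _) : Set (Ideal GaussianInt × Ideal GaussianInt)) := by
    ext p
    rw [Finset.mem_coe, Finset.mem_product, mem_IA x hx, mem_IA x hx]
    unfold P
    rw [Set.mem_ofPred_eq]
    tauto
  rw [this, Set.ncard_coe_finset, Finset.card_product, sq]

lemma PK_card (x : ℝ) (hx : 0 ≤ x) (K : Ideal GaussianInt) (hK : K ≠ ⊥) :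
    {p ∈ P x | p.1 ⊔ p.2 = K}.ncard = BI (x / normI K) := by
  classical
  have hn : (1:ℝ) ≤ normI K := by exact_mod_cast normI_pos K hK
  have key : ∀ I, (I ≠ ⊥ ∧ (normI I : ℝ) ≤ x) ∧ K ∣ I ↔ ∃ J ∈ IA (x / normI K), K * J = I := by
    intro I
    have := Finset.ext_iff.1 (IA_image x hx K hK) I
    rwa [Finset.mem_filter, mem_IA x hx, Finset.mem_image] at this
  have : {p ∈ P x | p.1 ⊔ p.2 = K} = (fun p : Ideal GaussianInt × Ideal GaussianInt => (K * p.1, K * p.2)) ''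
      (((IA (x / normI K) ×ˢ IA (x / normI K)).filter (fun p => p.1 ⊔ p.2 = 1) : Finset _) :
        Set (Ideal GaussianInt × Ideal GaussianInt)) := by
    ext ⟨I, J⟩
    rw [Set.mem_image]
    constructor
    · rintro ⟨⟨h1, h2, h3, h4⟩, h5⟩
      simp only at h1 h2 h3 h4 h5
      obtain ⟨I', hI', rfl⟩ := (key I).1 ⟨⟨h1, h3⟩, Ideal.dvd_iff_le.2 (h5 ▸ le_sup_left)⟩
      obtain ⟨J', hJ', rfl⟩ := (key J).1 ⟨⟨h2, h4⟩, Ideal.dvd_iff_le.2 (h5 ▸ le_sup_right)⟩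
      refine ⟨(I', J'), ?_, rfl⟩
      rw [Finset.mem_coe, Finset.mem_filter, Finset.mem_product]
      refine ⟨⟨hI', hJ'⟩, ?_⟩
      rw [← Ideal.mul_sup] at h5
      exact mul_left_cancel₀ hK (h5.trans (mul_one K).symm)
    · rintro ⟨⟨I', J'⟩, h, he⟩
      rw [Finset.mem_coe, Finset.mem_filter, Finset.mem_product] at h
      simp only [Prod.mk.injEq] at he h
      have a1 := (key I).2 ⟨I', h.1.1, he.1⟩
      have a2 := (key J).2 ⟨J', h.1.2, he.2⟩
      refine ⟨⟨a1.1.1, a2.1.1, a1.1.2, a2.1.2⟩, ?_⟩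
      simp only
      rw [← he.1, ← he.2, ← Ideal.mul_sup, h.2, mul_one]
  rw [this, Set.ncard_image_of_injective, Set.ncard_coe_finset]
  · rfl
  · rintro ⟨a, b⟩ ⟨c, d⟩ h
    simp only [Prod.mk.injEq] at h
    rw [mul_left_cancel₀ hK h.1, mul_left_cancel₀ hK h.2]

theorem gcdProbability_asymptotic :
    ∃ C : ℝ, 0 < C ∧ ∀ x : ℝ, 1 ≤ x → ∀ K : Ideal GaussianInt, K ≠ ⊥ → (normI K : ℝ) ≤ x →
      |({p ∈ P x | p.1 ⊔ p.2 = K}.ncard : ℝ) / ((P x).ncard : ℝ) -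
          1 / (zetaQi2 * (normI K : ℝ) ^ 2)|
        ≤ C / (x ^ ((2 : ℝ) / 3) * (normI K : ℝ) ^ ((4 : ℝ) / 3)) := by
  obtain ⟨d, hd, hA⟩ := A_lower
  have hc := cc_pos
  have hz := zeta_ge
  have hM : MI = 1 / zetaQi2 := by
    rw [eq_div_iff (by positivity)]; exact M_zeta
  have hS := S43_nonneg
  have hCB : 0 ≤ CB := by unfold CB; positivity
  set E : ℝ := (100 + cc) * (100 + 3 * cc) with hE
  have hE0 : 0 < E := by positivity
  refine ⟨(CB + E) / d^2, by positivity, ?_⟩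
  intro x hx K hK hKx
  have hn : (1:ℝ) ≤ normI K := by exact_mod_cast normI_pos K hK
  rw [P_card x (by linarith), PK_card x (by linarith) K hK]
  have hx0 : 0 < x := by linarith
  have hB := B_asymp (x / normI K) (by positivity)
  have hQ := A_sq x hx0
  have hAx := hA x hx
  push_cast
  rw [hM, div_rpow hx0.le (by positivity), div_pow] at hB
  set N : ℝ := (normI K : ℝ)
  set A : ℝ := ((IA x).card : ℝ)
  set B : ℝ := (BI (x / N) : ℝ)
  set z := zetaQi2
  have hA0 : 0 < A := lt_of_lt_of_le (by positivity) hAx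
  have hN0 : 0 < N := by linarith
  have hz0 : 0 < z := by linarith
  -- numerator
  have e1 : B / A^2 - 1 / (z * N^2) =
      ((B - cc^2 * (x^2 / N^2) * (1 / z)) - (A^2 - cc^2 * x^2) * (1 / (z * N^2))) / A^2 := by
    field_simp
    ring
  have hN43 : N ^ ((4:ℝ)/3) ≤ N^2 := by
    rw [← rpow_natCast]; exact rpow_le_rpow_of_exponent_le hn (by norm_num)
  have h2 : |(A^2 - cc^2 * x^2) * (1 / (z * N^2))| ≤ E * (x ^ ((4:ℝ)/3) / N ^ ((4:ℝ)/3)) := by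
    rw [abs_mul, abs_of_nonneg (by positivity : 0 ≤ 1 / (z * N^2))]
    have h3 : 1 / (z * N^2) ≤ 1 / N ^ ((4:ℝ)/3) := by
      apply one_div_le_one_div_of_le (by positivity)
      nlinarith [sq_nonneg N]
    calc _ ≤ (E * x ^ ((4:ℝ)/3)) * (1 / N ^ ((4:ℝ)/3)) :=
          mul_le_mul hQ h3 (by positivity) (by positivity)
      _ = _ := by ring
  have h4 : |(B - cc^2 * (x^2 / N^2) * (1 / z)) - (A^2 - cc^2 * x^2) * (1 / (z * N^2))|
      ≤ (CB + E) * (x ^ ((4:ℝ)/3) / N ^ ((4:ℝ)/3)) := by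
    refine (abs_sub _ _).trans ?_
    rw [add_mul]
    exact add_le_add hB h2
  have hx2 : x^2 = x ^ ((4:ℝ)/3) * x ^ ((2:ℝ)/3) := by
    rw [← rpow_add hx0, ← rpow_natCast]; norm_num
  have hA2 : d^2 * x^2 ≤ A^2 := by
    rw [← mul_pow]; exact pow_le_pow_left₀ (by positivity) hAx 2
  rw [e1, abs_div, abs_of_nonneg (by positivity : 0 ≤ A^2)]
  calc _ ≤ ((CB + E) * (x ^ ((4:ℝ)/3) / N ^ ((4:ℝ)/3))) / (d^2 * x^2) := by
        apply div_le_div₀ (by positivity) h4 (by positivity) hA2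
    _ = _ := by
        rw [hx2]
        field_simp
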